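/- arXiv:2111.13432 — 9 statements merged into one kernel-verified Lean document; each statement's English description precedes it below -/
import Mathlib

section
/- Let A be a Noetherian integral domain of finite Krull dimension, and let A ⊆ B be an extension of integral domains such that B is integral over A. Let α ∈ B and let f(x) ∈ A[x] be a prime element of A[x] with f(α) = 0. Then the kernel of the evaluation homomorphism A[x] → B, g(x) ↦ g(α), equals the principal ideal generated by f; consequently the A-subalgebra A[α] of B generated by α is isomorphic to A[x]/(f(x)). -/
/-! The kernel `P` of evaluation at `α` is a prime ideal of `A[X]`, and it meets `A` only in `0`
because `A → B` is injective; hence so does `(f) ≤ P`. Primes of `A[X]` disjoint from the nonzero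
constants are determined by their extensions to `K[X]`, where `K = Frac A`, since `K[X]` is the
localization of `A[X]` at those constants. In the principal ideal domain `K[X]` the extension of
`(f)` is a nonzero prime, so it is maximal and equals the extension of `P`; contracting back gives
`(f) = P`. The isomorphism is then the first isomorphism theorem. -/

open Polynomial

/-- Among the prime ideals of `A[X]` that meet `A` only in `0`, there is no proper inclusion between
nonzero ones. -/
theorem eq_of_le_of_disjoint_constants {A : Type*} [CommRing A] [IsDomain A]
    {I P : Ideal A[X]} [I.IsPrime] [P.IsPrime] (hI : I ≠ ⊥) (hIP : I ≤ P)
    (hP : ∀ a : A, C a ∈ P → a = 0) : I = P := by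
  let K := FractionRing A
  let M : Submonoid A[X] := (nonZeroDivisors A).map (C : A →+* A[X])
  have hdisj : Disjoint (M : Set A[X]) P := by
    rw [Set.disjoint_left]
    rintro _ ⟨a, ha, rfl⟩ h
    exact nonZeroDivisors.ne_zero ha (hP a h)
  have hdisjI : Disjoint (M : Set A[X]) I := hdisj.mono_right hIP
  let : Algebra A[X] K[X] := (mapRingHom (algebraMap A K)).toAlgebra
  have : IsLocalization M K[X] := Polynomial.isLocalization (nonZeroDivisors A) K
  have hinj : Function.Injective (algebraMap A[X] K[X]) :=
    Polynomial.map_injective _ (IsFractionRing.injective A K)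
  have hmapI : (I.map (algebraMap A[X] K[X])).IsPrime :=
    IsLocalization.isPrime_of_isPrime_disjoint M _ I inferInstance hdisjI
  have hmapP : (P.map (algebraMap A[X] K[X])).IsPrime :=
    IsLocalization.isPrime_of_isPrime_disjoint M _ P inferInstance hdisj
  have hne : I.map (algebraMap A[X] K[X]) ≠ ⊥ := by
    rwa [Ne, Ideal.map_eq_bot_iff_of_injective hinj]
  have hmax : (I.map (algebraMap A[X] K[X])).IsMaximal := hmapI.isMaximal hne
  have heq := hmax.eq_of_le hmapP.ne_top (Ideal.map_mono hIP)
  rw [← IsLocalization.under_map_of_isPrime_disjoint M K[X] (I := I) ‹_› hdisjI, heq,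
    IsLocalization.under_map_of_isPrime_disjoint M K[X] (I := P) ‹_› hdisj]

/-- Let `A` be a Noetherian integral domain of finite Krull dimension and
let `A ⊆ B` be an extension of integral domains with `B` integral over `A`.  If `α ∈ B` is a
root of a polynomial `f ∈ A[x]` which is prime in `A[x]`, then the kernel of the evaluation
homomorphism `A[x] → B`, `g ↦ g(α)`, is the principal ideal generated by `f`; consequently
the subalgebra `A[α]` of `B` is isomorphic to `A[x]/(f)`. -/
theorem ker_aeval_eq_span_of_prime
    (A : Type*) [CommRing A] [IsDomain A] [IsNoetherianRing A]
    (hdim : ringKrullDim A < ⊤)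
    (B : Type*) [CommRing B] [IsDomain B] [Algebra A B]
    (hinj : Function.Injective (algebraMap A B))
    [Algebra.IsIntegral A B]
    (α : B) (f : A[X]) (hf : Prime f) (hfα : Polynomial.aeval α f = 0) :
    RingHom.ker (Polynomial.aeval α : A[X] →ₐ[A] B) = Ideal.span {f} ∧
      Nonempty ((A[X] ⧸ Ideal.span {f}) ≃ₐ[A] Algebra.adjoin A {α}) := by
  have hker : RingHom.ker (Polynomial.aeval α : A[X] →ₐ[A] B) = Ideal.span {f} := by
    have : (Ideal.span {f}).IsPrime := (Ideal.span_singleton_prime hf.ne_zero).2 hf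
    have : (RingHom.ker (Polynomial.aeval α : A[X] →ₐ[A] B)).IsPrime := RingHom.ker_isPrime _
    refine (eq_of_le_of_disjoint_constants ?_ ?_ ?_).symm
    · simpa using hf.ne_zero
    · rw [Ideal.span_singleton_le_iff_mem]
      exact hfα
    · intro a ha
      rw [RingHom.mem_ker, aeval_C] at ha
      exact (map_eq_zero_iff _ hinj).1 ha
  refine ⟨hker, ⟨(Ideal.quotientEquivAlgOfEq A hker.symm).trans
    ((Ideal.quotientKerEquivRange _).trans
      (Subalgebra.equivOfEq _ _ (Algebra.adjoin_singleton_eq_range_aeval A α).symm))⟩⟩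
end

section
/- Let A be an integral domain that is integrally closed in its field of fractions, let p be a prime number, and let α ∈ A be an element that is not a p-th power in A (there is no u ∈ A with u^p = α). Then the polynomial x^p − α is a prime element of the polynomial ring A[x]. -/
/-!
Let `K` be the field of fractions of `A`. Since `A` is integrally closed, any `p`-th root of `α`
in `K` already lies in `A`, so `α` is not a `p`-th power in `K`, and `X ^ p - α` is irreducible,
hence prime, in `K[X]` (`X_pow_sub_C_irreducible_of_prime`). Because `X ^ p - α` is monic, it
divides a polynomial over `A` as soon as it does so over `K` (`Polynomial.map_dvd_map`), so
primality descends to `A[X]`.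
-/

open Polynomial

/-- Let `A` be an integrally closed domain, `p` a prime number and
`α ∈ A` an element that is not a `p`-th power in `A`.  Then `x^p − α` is a prime element
of the polynomial ring `A[x]`. -/
theorem prime_X_pow_sub_C_of_not_isPthPower
    (A : Type*) [CommRing A] [IsDomain A] [IsIntegrallyClosed A]
    (p : ℕ) (hp : p.Prime) (α : A) (hα : ¬ ∃ u : A, u ^ p = α) :
    Prime ((X : A[X]) ^ p - C α) := by
  let K := FractionRing A
  have hinj : Function.Injective (algebraMap A K) := IsFractionRing.injective A K
  have hmonic : ((X : A[X]) ^ p - C α).Monic := monic_X_pow_sub_C α hp.ne_zero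
  have hK : ∀ b : K, b ^ p ≠ algebraMap A K α := by
    intro b hb
    obtain ⟨u, rfl⟩ := IsIntegrallyClosed.exists_algebraMap_eq_of_isIntegral_pow (R := A)
      hp.pos (hb.symm ▸ isIntegral_algebraMap : IsIntegral A (b ^ p))
    exact hα ⟨u, hinj (by rw [map_pow, hb])⟩
  have hprime : Prime (((X : A[X]) ^ p - C α).map (algebraMap A K)) := by
    have h := (X_pow_sub_C_irreducible_of_prime hp hK).prime
    simpa using h
  refine ⟨hmonic.ne_zero, fun hu => hprime.not_isUnit (hu.map (mapRingHom (algebraMap A K))), ?_⟩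
  intro f g hfg
  have h := (map_dvd_map _ hinj hmonic).2 hfg
  rw [Polynomial.map_mul] at h
  exact (hprime.dvd_or_dvd h).imp (map_dvd_map _ hinj hmonic).1 (map_dvd_map _ hinj hmonic).1
end

section
/- Let A be an integral domain that is integrally closed in its field of fractions, and let D be a set of derivations d : A → A. Then the subring B = { a ∈ A : d(a) = 0 for all d ∈ D } of constants is an integral domain that is integrally closed in its field of fractions. -/
/-!
The ring of constants `B` is closed under division inside `A`: if `a * q = p` with `p`, `q`
constants and `q ≠ 0`, the Leibniz rule gives `q * d a = 0`, hence `d a = 0`. An element `p / q`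
of `Frac B` integral over `B` is, viewed in `Frac A`, integral over `A`, so it is some `a ∈ A`
with `a * q = p`; thus `a` is a constant.
-/

/-- The subring of common constants of a set of derivations `d : A → A` of a commutative
ring `A`. -/
def constantsSubring {A : Type*} [CommRing A] (D : Set (Derivation ℤ A A)) : Subring A where
  carrier := {a | ∀ d ∈ D, d a = 0}
  zero_mem' := by intro d _; simp
  one_mem' := by intro d _; simp
  add_mem' := by
    intro a b ha hb d hd
    simp [ha d hd, hb d hd]
  neg_mem' := by
    intro a ha d hd
    simp [ha d hd]
  mul_mem' := by
    intro a b ha hb d hd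
    rw [Derivation.leibniz]
    simp [ha d hd, hb d hd]

/-- The constants are closed under division in `A` by nonzero constants. -/
theorem mem_constantsSubring_of_mul_mem {A : Type*} [CommRing A] [IsDomain A]
    {D : Set (Derivation ℤ A A)} {a q : A} (hq : q ∈ constantsSubring D) (hq0 : q ≠ 0)
    (h : a * q ∈ constantsSubring D) : a ∈ constantsSubring D := by
  intro d hd
  have h1 : d (a * q) = 0 := h d hd
  have h2 : d q = 0 := hq d hd
  rw [Derivation.leibniz, h2, smul_zero, zero_add, smul_eq_mul] at h1
  exact (mul_eq_zero.mp h1).resolve_left hq0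

/-- Let `A` be an integrally closed domain and `D` a set of derivations
`d : A → A`.  Then the subring `B = {a ∈ A : d(a) = 0 for all d ∈ D}` of constants is an
integrally closed domain. -/
theorem constantsSubring_isIntegrallyClosed
    (A : Type*) [CommRing A] [IsDomain A] [IsIntegrallyClosed A]
    (D : Set (Derivation ℤ A A)) :
    IsDomain (constantsSubring D) ∧ IsIntegrallyClosed (constantsSubring D) := by
  refine ⟨inferInstance, (isIntegrallyClosed_iff (FractionRing (constantsSubring D))).mpr ?_⟩
  intro x hx
  have hinj : Function.Injective (algebraMap (constantsSubring D) (FractionRing A)) := by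
    rw [IsScalarTower.algebraMap_eq (constantsSubring D) A (FractionRing A)]
    exact (IsFractionRing.injective A (FractionRing A)).comp Subtype.val_injective
  -- the inclusion of `Frac B` into `Frac A`
  let φ : FractionRing (constantsSubring D) →ₐ[constantsSubring D] FractionRing A :=
    IsFractionRing.liftAlgHom (g := Algebra.ofId _ _) hinj
  have hA : IsIntegral A (φ x) := (hx.map φ).tower_top
  obtain ⟨a, ha⟩ := IsIntegrallyClosed.isIntegral_iff.mp hA
  obtain ⟨p, q, hq, rfl⟩ := IsFractionRing.div_surjective (A := constantsSubring D) x
  have hq0 : q ≠ 0 := nonZeroDivisors.ne_zero hq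
  have hqK : algebraMap (constantsSubring D) (FractionRing A) q ≠ 0 :=
    (map_ne_zero_iff _ hinj).mpr hq0
  have haq : a * (q : A) = p := by
    apply IsFractionRing.injective A (FractionRing A)
    rw [map_div₀, φ.commutes, φ.commutes, eq_div_iff hqK] at ha
    rw [map_mul]
    exact ha
  have hmem : a ∈ constantsSubring D :=
    mem_constantsSubring_of_mul_mem q.2 (fun h => hq0 (Subtype.ext h)) (haq ▸ p.2)
  exact ⟨⟨a, hmem⟩, φ.toRingHom.injective ((φ.commutes _).trans ha)⟩
end

section
/- Let F be a field of prime characteristic p and let L be a Lie algebra over F that is nilpotent of class at most p, i.e., the p-th term of the lower central series of L is zero (lowerCentralSeries F L L p = ⊥, where the 0-th term is L itself). Then for every x ∈ L, the element ι(x)^p lies in the center of the universal enveloping algebra U(L). -/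
/-!
In an associative algebra of characteristic `p`, left and right multiplication by `a` commute, so
the Frobenius identity gives `(ad a) ^ p = ad (a ^ p)`. For `a = ι x` this means
`[ι(x) ^ p, ι(y)] = ι ((ad x) ^ p y)`, and `(ad x) ^ p y` lies in the `p`-th term of the lower
central series, which vanishes. Hence `ι(x) ^ p` commutes with the image of `ι`, and this image
generates the enveloping algebra.
-/

/-- An element of the enveloping algebra commuting with the image of `ι` is central. -/
theorem mem_center_of_commute_iota (F : Type*) [Field F] (L : Type*) [LieRing L] [LieAlgebra F L]
    (u : UniversalEnvelopingAlgebra F L)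
    (h : ∀ y : L, Commute u (UniversalEnvelopingAlgebra.ι F y)) :
    u ∈ Subalgebra.center F (UniversalEnvelopingAlgebra F L) := by
  rw [Subalgebra.mem_center_iff]
  intro v
  obtain ⟨t, rfl⟩ : ∃ t, UniversalEnvelopingAlgebra.mkAlgHom F L t = v :=
    Quotient.exists_rep v
  suffices Commute u (UniversalEnvelopingAlgebra.mkAlgHom F L t) from this.eq.symm
  induction t using TensorAlgebra.induction with
  | algebraMap r => rw [AlgHom.commutes]; exact (Algebra.commutes r u).symm
  | ι y => exact h y
  | mul a b ha hb => rw [map_mul]; exact ha.mul_right hb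
  | add a b ha hb => rw [map_add]; exact ha.add_right hb

/-- `(ad a) ^ p = ad (a ^ p)` in an associative algebra of characteristic `p`. -/
theorem mulLeft_sub_mulRight_pow_char (F : Type*) [Field F] (p : ℕ) (hp : p.Prime) [CharP F p]
    (A : Type*) [Ring A] [Algebra F A] (a : A) :
    (LinearMap.mulLeft F a - LinearMap.mulRight F a) ^ p =
      LinearMap.mulLeft F (a ^ p) - LinearMap.mulRight F (a ^ p) := by
  rcases subsingleton_or_nontrivial A with hA | hA
  · ext b
    exact Subsingleton.elim _ _
  · have : Fact p.Prime := ⟨hp⟩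
    have : CharP (Module.End F A) p :=
      charP_of_injective_algebraMap (algebraMap F (Module.End F A)).injective p
    rw [← LinearMap.pow_mulLeft, ← LinearMap.pow_mulRight]
    exact sub_pow_char_of_commute p (LinearMap.commute_mulLeft_right a a)

theorem mulLeft_sub_mulRight_pow_iota (F : Type*) [Field F] (L : Type*) [LieRing L]
    [LieAlgebra F L] (x y : L) (k : ℕ) :
    ((LinearMap.mulLeft F (UniversalEnvelopingAlgebra.ι F x) -
        LinearMap.mulRight F (UniversalEnvelopingAlgebra.ι F x)) ^ k)
      (UniversalEnvelopingAlgebra.ι F y) =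
      UniversalEnvelopingAlgebra.ι F ((LieModule.toEnd F L L x)^[k] y) := by
  letI : LieRing (UniversalEnvelopingAlgebra F L) := LieRing.ofAssociativeRing
  induction k with
  | zero => rfl
  | succ k ih =>
    rw [pow_succ', Module.End.mul_apply, ih, Function.iterate_succ_apply',
      LieModule.toEnd_apply_apply, LieHom.map_lie, LieRing.of_associative_ring_bracket]
    rfl

/-- Let `F` be a field of prime characteristic `p` and `L` a Lie algebra
over `F` that is nilpotent of class at most `p` (the `p`-th term of the lower central
series vanishes).  Then for every `x ∈ L` the element `ι(x)^p` lies in the center of the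
universal enveloping algebra `U(L)`. -/
theorem iota_pow_char_mem_center
    (F : Type*) [Field F] (p : ℕ) (hp : p.Prime) [CharP F p]
    (L : Type*) [LieRing L] [LieAlgebra F L]
    (hnilp : LieModule.lowerCentralSeries F L L p = ⊥) (x : L) :
    (UniversalEnvelopingAlgebra.ι F x) ^ p ∈
      Subalgebra.center F (UniversalEnvelopingAlgebra F L) := by
  refine mem_center_of_commute_iota F L _ fun y => ?_
  have hmem := LieModule.iterate_toEnd_mem_lowerCentralSeries F L L x y p
  rw [hnilp, LieSubmodule.mem_bot] at hmem
  have h := mulLeft_sub_mulRight_pow_iota F L x y p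
  rw [hmem, map_zero, mulLeft_sub_mulRight_pow_char F p hp] at h
  exact sub_eq_zero.mp h
end

section
/- Let p ≥ 3 be a prime and F a field of characteristic p. Let R = F[t₁,…,t₅] be the polynomial ring in five variables and let f = t₅^p − t₃² + 2t₂t₄^p. Then the quotient ring R/(f) is an integral domain that is integrally closed in its field of fractions. -/
/-!
Up to renaming variables the ring is `A[√g]` with `A = F[t₁,t₂,t₄,t₅]` and
`g = t₅ ^ p + 2 t₂ t₄ ^ p`. The element `g` is prime: it is linear in `t₂` and its coefficients
`2 t₄ ^ p` and `t₅ ^ p` are relatively prime. In particular `g` is not a square, so `T ^ 2 - g` is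
irreducible over the unique factorization domain `A`, and `A[√g]` is a domain.

For normality only the following is needed: `A` is an integrally closed domain, `2` is a unit of
`A`, and `g` is prime. If `x = (a + b√g) / n` is integral, then so is its conjugate, hence so is
the trace `2a / n`, and `n ∣ a`. Then `b√g / n` is integral as well, so `n ^ 2 ∣ b ^ 2 g`, and
since `g` is prime `n ∣ b`. This gives `x ∈ A[√g]`.
-/

/-- A square can be cancelled from a prime factor: `c ^ 2 ∣ b ^ 2 * g` forces `c ∣ b`. -/
lemma dvd_of_sq_dvd_sq_mul_prime {A : Type*} [CommRing A] [IsDomain A] [IsIntegrallyClosed A]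
    {g b c : A} (hg : Prime g) (hc : c ≠ 0) (h : c ^ 2 ∣ b ^ 2 * g) : c ∣ b := by
  obtain ⟨s, hs⟩ := h
  have h1 : c ∣ b * g := by
    rw [← IsIntegrallyClosed.pow_dvd_pow_iff two_ne_zero]
    exact ⟨s * g, by linear_combination g * hs⟩
  obtain ⟨z, hz⟩ := h1
  have h2 : z ^ 2 = g * s := by
    apply mul_left_cancel₀ (pow_ne_zero 2 hc)
    linear_combination g * hs - (b * g + c * z) * hz
  obtain ⟨w, rfl⟩ := hg.dvd_of_dvd_pow (Dvd.intro _ h2.symm)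
  exact ⟨w, mul_right_cancel₀ hg.ne_zero (by linear_combination hz)⟩

/-- A fraction `a / c` of an integrally closed domain `A` that is integral over `A`, as an element
`y` of some extension field, lies in `A`. -/
lemma dvd_of_isIntegral_of_mul_eq {A L : Type*} [CommRing A] [IsDomain A] [IsIntegrallyClosed A]
    [Field L] [Algebra A L] (hinj : Function.Injective (algebraMap A L))
    {a c : A} (hc : c ≠ 0) {y : L} (hy : IsIntegral A y)
    (h : algebraMap A L c * y = algebraMap A L a) : c ∣ a := by
  have : FaithfulSMul A L := (faithfulSMul_iff_algebraMap_injective A L).2 hinj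
  let := FractionRing.liftAlgebra A L
  have := FractionRing.isScalarTower_liftAlgebra A L
  have hcL : algebraMap A L c ≠ 0 := (map_ne_zero_iff _ hinj).2 hc
  have hcK : algebraMap A (FractionRing A) c ≠ 0 :=
    (map_ne_zero_iff _ (IsFractionRing.injective A (FractionRing A))).2 hc
  have hyK : y = algebraMap (FractionRing A) L
      (algebraMap A (FractionRing A) a / algebraMap A (FractionRing A) c) := by
    rw [map_div₀, ← IsScalarTower.algebraMap_apply, ← IsScalarTower.algebraMap_apply,
      eq_div_iff hcL, ← h, mul_comm]
  rw [hyK, isIntegral_algebraMap_iff (algebraMap (FractionRing A) L).injective,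
    IsIntegrallyClosed.isIntegral_iff] at hy
  obtain ⟨z, hz⟩ := hy
  refine ⟨z, IsFractionRing.injective A (FractionRing A) ?_⟩
  rw [map_mul, hz]
  field_simp

/-- Normality of `B = A[√g]`. The ring `B` is described by an element `t` with `t ^ 2 = g` that
generates `B` over `A`, together with the conjugation `σ`. -/
lemma isIntegrallyClosed_of_sqrt_prime {A B : Type*} [CommRing A] [IsDomain A]
    [IsIntegrallyClosed A] [CommRing B] [IsDomain B] [Algebra A B]
    (hinj : Function.Injective (algebraMap A B)) (h2 : IsUnit (2 : A))
    {g : A} (hg : Prime g) (t : B) (ht : t ^ 2 = algebraMap A B g)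
    (hB : ∀ x : B, ∃ a b : A, x = algebraMap A B a + algebraMap A B b * t)
    (σ : B ≃ₐ[A] B) (hσ : σ t = -t) : IsIntegrallyClosed B := by
  have : Algebra.IsIntegral A B := by
    refine ⟨fun x => ?_⟩
    obtain ⟨a, b, rfl⟩ := hB x
    refine isIntegral_algebraMap.add (isIntegral_algebraMap.mul ?_)
    exact IsIntegral.of_pow two_pos (ht ▸ isIntegral_algebraMap)
  rw [isIntegrallyClosed_iff (FractionRing B)]
  intro x hx
  have hxA : IsIntegral A x := isIntegral_trans (A := B) x hx
  let τ : FractionRing B ≃ₐ[A] FractionRing B := IsFractionRing.algEquivOfAlgEquiv σ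
  have hτ : ∀ u : B, τ (algebraMap B (FractionRing B) u) = algebraMap B (FractionRing B) (σ u) :=
    fun u => IsFractionRing.algEquivOfAlgEquiv_algebraMap σ u
  have hBL : Function.Injective (algebraMap B (FractionRing B)) := IsFractionRing.injective _ _
  have hAL : Function.Injective (algebraMap A (FractionRing B)) := by
    rw [IsScalarTower.algebraMap_eq A B (FractionRing B)]
    exact hBL.comp hinj
  have key : ∃ n a b : A, n ≠ 0 ∧ algebraMap A (FractionRing B) n * x =
      algebraMap A _ a + algebraMap A _ b * algebraMap B _ t := by
    obtain ⟨u, v, hv, rfl⟩ := IsFractionRing.div_surjective B x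
    have hv0 := nonZeroDivisors.ne_zero hv
    have hvL : algebraMap B (FractionRing B) v ≠ 0 := (map_ne_zero_iff _ hBL).2 hv0
    obtain ⟨c, d, hcd⟩ := hB v
    obtain ⟨a, b, hab⟩ := hB (u * σ v)
    have hn : algebraMap A B (c ^ 2 - d ^ 2 * g) = v * σ v := by
      rw [hcd]
      simp only [map_add, map_mul, map_sub, map_pow, AlgEquiv.commutes, hσ]
      rw [← ht]; ring
    refine ⟨c ^ 2 - d ^ 2 * g, a, b, ?_, ?_⟩
    · intro h0
      rw [h0, map_zero] at hn
      exact mul_ne_zero hv0 ((map_ne_zero_iff _ σ.injective).2 hv0) hn.symm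
    · simp only [IsScalarTower.algebraMap_apply A B (FractionRing B)]
      rw [hn, ← map_mul, ← map_add, ← hab, map_mul, map_mul]
      field_simp
  obtain ⟨n, a, b, hn, hx1⟩ := key
  have hnL : algebraMap A (FractionRing B) n ≠ 0 := (map_ne_zero_iff _ hAL).2 hn
  have hx2 : algebraMap A (FractionRing B) n * τ x =
      algebraMap A _ a - algebraMap A _ b * algebraMap B _ t := by
    have := congrArg τ hx1
    simp only [map_add, map_mul, AlgEquiv.commutes, hτ, hσ, map_neg] at this
    rw [this]; ring
  -- The trace of `x` is integral, so the rational part `a / n` lies in `A`.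
  have hna : n ∣ a := by
    have : n ∣ 2 * a := by
      refine dvd_of_isIntegral_of_mul_eq hAL hn (hxA.add (hxA.map τ)) ?_
      rw [map_mul, map_ofNat]
      linear_combination hx1 + hx2
    exact (h2.dvd_mul_left).1 this
  obtain ⟨a', rfl⟩ := hna
  have hy : IsIntegral A (x - algebraMap A _ a') := hxA.sub isIntegral_algebraMap
  have htL : algebraMap B (FractionRing B) t ^ 2 = algebraMap A _ g := by
    rw [← map_pow, ht, ← IsScalarTower.algebraMap_apply]
  have hnb : n ∣ b := by
    refine dvd_of_sq_dvd_sq_mul_prime hg hn (dvd_of_isIntegral_of_mul_eq hAL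
      (pow_ne_zero 2 hn) (hy.pow 2) ?_)
    have h3 : algebraMap A (FractionRing B) n * (x - algebraMap A _ a') =
        algebraMap A _ b * algebraMap B _ t := by
      rw [map_mul] at hx1
      linear_combination hx1
    rw [map_pow, ← mul_pow, h3, mul_pow, htL, map_mul, map_pow]
  obtain ⟨b', rfl⟩ := hnb
  refine ⟨algebraMap A B a' + algebraMap A B b' * t, mul_left_cancel₀ hnL ?_⟩
  rw [hx1]
  simp only [map_add, map_mul, ← IsScalarTower.algebraMap_apply]
  ring

section

open Polynomial

lemma irreducible_X_sq_sub_C_of_prime {A : Type*} [CommRing A] [IsDomain A] {g : A}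
    (hg : Prime g) : Irreducible (X ^ 2 - C g : A[X]) := by
  have hm : (X ^ 2 - C g : A[X]).Monic := monic_X_pow_sub_C g two_ne_zero
  have hd : (X ^ 2 - C g : A[X]).natDegree = 2 := natDegree_X_pow_sub_C
  rw [hm.irreducible_iff_roots_eq_zero_of_degree_le_three hd.ge (hd.le.trans (by norm_num))]
  refine Multiset.eq_zero_of_forall_notMem fun r hr => ?_
  have h : r ^ 2 = g := by
    have := (mem_roots'.1 hr).2
    simpa [sub_eq_zero] using this
  exact hg.irreducible.not_isSquare ⟨r, by rw [← h, sq]⟩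

/-- For `A` a unique factorization domain in which `2` is a unit and `g ∈ A` prime, `A[√g]` is a
normal domain. -/
lemma adjoinRoot_sqrt_prime_normal {A : Type*} [CommRing A] [IsDomain A]
    [UniqueFactorizationMonoid A] (h2 : IsUnit (2 : A)) {g : A} (hg : Prime g) :
    IsDomain (AdjoinRoot (X ^ 2 - C g : A[X])) ∧
      IsIntegrallyClosed (AdjoinRoot (X ^ 2 - C g : A[X])) := by
  have hm : (X ^ 2 - C g : A[X]).Monic := monic_X_pow_sub_C g two_ne_zero
  have hdeg : (X ^ 2 - C g : A[X]).degree = 2 := degree_X_pow_sub_C two_pos g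
  have hdom : IsDomain (AdjoinRoot (X ^ 2 - C g : A[X])) :=
    AdjoinRoot.isDomain_of_prime (irreducible_X_sq_sub_C_of_prime hg).prime
  refine ⟨hdom, ?_⟩
  have ht : (AdjoinRoot.root (X ^ 2 - C g : A[X])) ^ 2 = algebraMap A _ g := by
    have := AdjoinRoot.eval₂_root (X ^ 2 - C g : A[X])
    simpa [sub_eq_zero] using this
  let φ : AdjoinRoot (X ^ 2 - C g : A[X]) →ₐ[A] AdjoinRoot (X ^ 2 - C g : A[X]) :=
    AdjoinRoot.liftAlgHom _ (Algebra.ofId A _) (-AdjoinRoot.root _) (by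
      simp [ht])
  have hφ : φ (AdjoinRoot.root _) = -AdjoinRoot.root _ := AdjoinRoot.liftAlgHom_root ..
  have hφφ : φ.comp φ = AlgHom.id A _ := by
    apply AdjoinRoot.algHom_ext
    simp [hφ]
  refine isIntegrallyClosed_of_sqrt_prime
    (AdjoinRoot.of.injective_of_degree_ne_zero (by rw [hdeg]; norm_num)) h2 hg
    (AdjoinRoot.root _) ht ?_ (AlgEquiv.ofAlgHom φ φ hφφ hφφ) hφ
  intro x
  obtain ⟨q, rfl⟩ := AdjoinRoot.mk_surjective x
  have hq : (q %ₘ (X ^ 2 - C g)).degree ≤ 1 := by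
    have := degree_modByMonic_lt q hm
    rw [hdeg] at this
    exact Order.le_of_lt_succ this
  refine ⟨(q %ₘ (X ^ 2 - C g)).coeff 0, (q %ₘ (X ^ 2 - C g)).coeff 1, ?_⟩
  have h1 : AdjoinRoot.mk (X ^ 2 - C g) q = AdjoinRoot.mk (X ^ 2 - C g) (q %ₘ (X ^ 2 - C g)) := by
    conv_lhs => rw [← modByMonic_add_div q (X ^ 2 - C g)]
    simp
  rw [h1]
  conv_lhs => rw [eq_X_add_C_of_degree_le_one hq]
  simp [AdjoinRoot.algebraMap_eq, add_comm]

end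

open MvPolynomial

/-- The radicand `t₅ ^ p + 2 t₂ t₄ ^ p`, with `t₂, t₁, t₄, t₅` written as `X 0, …, X 3`. -/
lemma prime_linear_relation {F : Type*} [Field F] (h2 : (2 : F) ≠ 0) (p : ℕ) :
    Prime (X 3 ^ p + 2 * X 0 * X 2 ^ p : MvPolynomial (Fin 4) F) := by
  have h2' : IsUnit (2 : MvPolynomial (Fin 3) F) := by
    rw [← map_ofNat (MvPolynomial.C (R := F) (σ := Fin 3)) 2]
    exact (IsUnit.mk0 _ h2).map _
  rw [← MulEquiv.prime_iff (finSuccEquiv F 3), ← irreducible_iff_prime]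
  have h3 : finSuccEquiv F 3 (X 3 ^ p + 2 * X 0 * X 2 ^ p) =
      Polynomial.C (2 * X 1 ^ p) * Polynomial.X + Polynomial.C (X 2 ^ p) := by
    have e3 : (3 : Fin 4) = Fin.succ 2 := rfl
    have e2 : (2 : Fin 4) = Fin.succ 1 := rfl
    simp only [map_add, map_mul, map_pow, e3, e2, finSuccEquiv_X_succ, finSuccEquiv_X_zero,
      map_ofNat]
    ring
  rw [h3]
  refine Polynomial.irreducible_C_mul_X_add_C
    (mul_ne_zero h2'.ne_zero (pow_ne_zero _ (X_ne_zero _))) ?_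
  rw [isRelPrime_mul_unit_left_left h2']
  refine IsRelPrime.pow ?_
  have hX : Irreducible (X 1 : MvPolynomial (Fin 3) F) := X_prime.irreducible
  rw [hX.isRelPrime_iff_not_dvd, X_dvd_X]
  simp

/-- Let `p ≥ 3` be a prime, `F` a field of characteristic `p`,
`R = F[t₁,…,t₅]` and `f = t₅^p − t₃² + 2t₂t₄^p`.  Then `R/(f)` is an integrally closed
domain. -/
theorem quotient_g55_relation_isIntegrallyClosed
    (p : ℕ) (hp : p.Prime) (hp3 : 3 ≤ p)
    (F : Type*) [Field F] [CharP F p]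
    (f : MvPolynomial (Fin 5) F)
    (hf : f = X 4 ^ p - X 2 ^ 2 + 2 * X 1 * X 3 ^ p) :
    IsDomain (MvPolynomial (Fin 5) F ⧸ Ideal.span {f}) ∧
      IsIntegrallyClosed (MvPolynomial (Fin 5) F ⧸ Ideal.span {f}) := by
  have h2 : (2 : F) ≠ 0 := Ring.two_ne_zero (by rw [ringChar.eq F p]; omega)
  have h2' : IsUnit (2 : MvPolynomial (Fin 4) F) := by
    rw [← map_ofNat (MvPolynomial.C (R := F) (σ := Fin 4)) 2]
    exact (IsUnit.mk0 _ h2).map _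
  obtain ⟨hd, hi⟩ := adjoinRoot_sqrt_prime_normal h2' (prime_linear_relation h2 p)
  -- Exchanging `t₁` and `t₃` makes `t₃` the variable split off by `finSuccEquiv`.
  let e : MvPolynomial (Fin 5) F ≃+* Polynomial (MvPolynomial (Fin 4) F) :=
    ((renameEquiv F (Equiv.swap (0 : Fin 5) 2)).trans (finSuccEquiv F 4)).toRingEquiv
  have he : e f = -(Polynomial.X ^ 2 -
      Polynomial.C (X 3 ^ p + 2 * X 0 * X 2 ^ p : MvPolynomial (Fin 4) F)) := by
    have s1 : Equiv.swap (0 : Fin 5) 2 1 = Fin.succ 0 := by decide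
    have s2 : Equiv.swap (0 : Fin 5) 2 2 = 0 := by decide
    have s3 : Equiv.swap (0 : Fin 5) 2 3 = Fin.succ 2 := by decide
    have s4 : Equiv.swap (0 : Fin 5) 2 4 = Fin.succ 3 := by decide
    change finSuccEquiv F 4 (rename (Equiv.swap (0 : Fin 5) 2) f) = _
    rw [hf]
    simp only [map_add, map_sub, map_mul, map_pow, map_ofNat, rename_X, s1, s2, s3, s4,
      finSuccEquiv_X_succ, finSuccEquiv_X_zero]
    ring
  let E : (MvPolynomial (Fin 5) F ⧸ Ideal.span {f}) ≃+* AdjoinRoot (Polynomial.X ^ 2 -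
      Polynomial.C (X 3 ^ p + 2 * X 0 * X 2 ^ p : MvPolynomial (Fin 4) F)) :=
    Ideal.quotientEquiv _ _ e (by
      rw [Ideal.map_span, Set.image_singleton, RingEquiv.coe_toRingHom, he,
        Ideal.span_singleton_neg])
  exact ⟨E.toMulEquiv.isDomain _, IsIntegrallyClosed.of_equiv E.symm⟩
end

section
/- Let p ≥ 5 be a prime and F a field of characteristic p. Let R = F[t₁,…,t₇] be the polynomial ring in seven variables and let f₁ = t₆^p − t₄² + 2t₃t₅^p and f₂ = t₇^p − 3t₂t₅^{2p} + 3t₃t₄t₅^p − t₄³. Then the quotient ring S = R/(f₁, f₂) is an integral domain, and the localization of S at the multiplicative set generated by the image of t₅ is an integral domain that is integrally closed in its field of fractions. -/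
open MvPolynomial

/-!
Write `S = R/(f₁, f₂)`. After inverting `t₅` the relation `f₁ = 0` can be solved for `t₃`
(as `2 ≠ 0` in `F`), and `f₂ = 0` can then be solved for `t₂` (as `3 ≠ 0`). Hence `S[1/t₅]` is the
localization away from `t₅` of the polynomial ring `F[t₁, t₄, t₅, t₆, t₇]`, a localization of a
factorial ring, so it is an integrally closed domain (`nonempty_localizationEquiv`).

For `S` itself it remains to see that `S` embeds in `S[1/t₅]`. Since `f₁` is monic in `t₆` and `f₂`
is monic in `t₇`, `S` embeds in (in fact is) a tower of two monogenic extensions by monic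
polynomials over `F[t₁, …, t₅]`. Such a tower is a free module over the domain `F[t₁, …, t₅]`, so
`t₅` is a nonzerodivisor on it (`mk_X_four_mem_nonZeroDivisors`).
-/

namespace QuotientG55

universe u

lemma exists_polynomial_hom {σ F T : Type*} [CommRing F] [CommRing T] (φ : F →+* T) (v : σ → T) :
    ∃ θ : MvPolynomial σ F →+* T, (∀ r, θ (C r) = φ r) ∧ ∀ i, θ (X i) = v i :=
  ⟨eval₂Hom φ v, eval₂Hom_C φ v, eval₂Hom_X' φ v⟩

lemma exists_quotient_hom {R T : Type*} [CommRing R] [CommRing T] {f₁ f₂ : R} (g : R →+* T)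
    (h₁ : g f₁ = 0) (h₂ : g f₂ = 0) :
    ∃ θ : R ⧸ Ideal.span {f₁, f₂} →+* T,
      ∀ x, θ (Ideal.Quotient.mk (Ideal.span {f₁, f₂}) x) = g x := by
  have hI : Ideal.span {f₁, f₂} ≤ RingHom.ker g := by
    refine Ideal.span_le.mpr ?_
    rintro f (rfl | rfl)
    exacts [h₁, h₂]
  exact ⟨Ideal.Quotient.lift _ g hI, fun x => Ideal.Quotient.lift_mk _ _ _⟩

/-- In a tower of two monogenic extensions of a domain `A` by monic polynomials, nonzero elements
of `A` are nonzerodivisors, because the tower is free over `A`. -/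
lemma eq_zero_of_tower_mul_eq_zero {A : Type*} [CommRing A] [IsDomain A]
    {g : Polynomial A} (hg : g.Monic) {h : Polynomial (AdjoinRoot g)} (hh : h.Monic)
    {a : A} (ha : a ≠ 0) {b : AdjoinRoot h}
    (hab : AdjoinRoot.of h (AdjoinRoot.of g a) * b = 0) : b = 0 := by
  have : Module.Free A (AdjoinRoot g) := hg.free_adjoinRoot
  have : Module.Free (AdjoinRoot g) (AdjoinRoot h) := hh.free_adjoinRoot
  have : Module.Free A (AdjoinRoot h) := Module.Free.trans (S := AdjoinRoot g)
  have hsmul : a • b = 0 := by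
    rw [Algebra.smul_def]
    exact hab
  exact (smul_eq_zero.mp hsmul).resolve_left ha

/-- Over a domain `A` there is a universal ring with `p`-th roots `x`, `y` of two given elements
`a`, `b`, and nonzero elements of `A` are nonzerodivisors in it. -/
lemma exists_root_tower {A : Type u} [CommRing A] [IsDomain A] {p : ℕ} (hp : p ≠ 0) (a b : A) :
    ∃ (B : Type u) (_ : CommRing B) (ι : A →+* B) (x y : B), x ^ p = ι a ∧ y ^ p = ι b ∧
      (∀ c, c ≠ 0 → ∀ z, ι c * z = 0 → z = 0) ∧
      ∀ (T : Type u) [CommRing T] (φ : A →+* T) (x' y' : T), x' ^ p = φ a → y' ^ p = φ b →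
        ∃ κ : B →+* T, (∀ c, κ (ι c) = φ c) ∧ κ x = x' ∧ κ y = y' := by
  have root_pow {D : Type u} [CommRing D] (d : D) :
      AdjoinRoot.root (Polynomial.X ^ p - Polynomial.C d) ^ p = AdjoinRoot.of _ d := by
    have := AdjoinRoot.eval₂_root (Polynomial.X ^ p - Polynomial.C d)
    rwa [Polynomial.eval₂_sub, Polynomial.eval₂_X_pow, Polynomial.eval₂_C, sub_eq_zero] at this
  let g : Polynomial A := Polynomial.X ^ p - Polynomial.C a
  let h : Polynomial (AdjoinRoot g) := Polynomial.X ^ p - Polynomial.C (AdjoinRoot.of g b)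
  refine ⟨AdjoinRoot h, inferInstance, (AdjoinRoot.of h).comp (AdjoinRoot.of g),
    AdjoinRoot.of h (AdjoinRoot.root g), AdjoinRoot.root h, ?_, root_pow _, ?_, ?_⟩
  · rw [← map_pow, root_pow]
    rfl
  · exact fun c hc z hz => eq_zero_of_tower_mul_eq_zero (Polynomial.monic_X_pow_sub_C _ hp)
      (Polynomial.monic_X_pow_sub_C _ hp) hc hz
  · intro T _ φ x' y' hx hy
    have hgx : g.eval₂ φ x' = 0 := by
      rw [Polynomial.eval₂_sub, Polynomial.eval₂_X_pow, Polynomial.eval₂_C, hx, sub_self]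
    have hhy : h.eval₂ (AdjoinRoot.lift φ x' hgx) y' = 0 := by
      rw [Polynomial.eval₂_sub, Polynomial.eval₂_X_pow, Polynomial.eval₂_C, AdjoinRoot.lift_of, hy,
        sub_self]
    refine ⟨AdjoinRoot.lift (AdjoinRoot.lift φ x' hgx) y' hhy, fun c => ?_, ?_,
      AdjoinRoot.lift_root _⟩
    · rw [RingHom.comp_apply, AdjoinRoot.lift_of, AdjoinRoot.lift_of]
    · rw [AdjoinRoot.lift_of, AdjoinRoot.lift_root]

section

variable {p : ℕ} {F : Type*} [Field F] {f₁ f₂ : MvPolynomial (Fin 7) F}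

lemma ofNat_mul_map_C_inv {σ T : Type*} [CommRing T] (k : MvPolynomial σ F →+* T) {n : ℕ}
    [n.AtLeastTwo] (hn : (ofNat(n) : F) ≠ 0) : (ofNat(n) : T) * k (C (ofNat(n))⁻¹) = 1 := by
  rw [← map_ofNat (k.comp C) n, RingHom.comp_apply, ← map_mul, ← map_mul, mul_inv_cancel₀ hn,
    map_one, map_one]

lemma mk_X_four_mem_nonZeroDivisors (hp : p ≠ 0)
    (hf₁ : f₁ = X 5 ^ p - X 3 ^ 2 + 2 * X 2 * X 4 ^ p)
    (hf₂ : f₂ = X 6 ^ p - 3 * X 1 * X 4 ^ (2 * p) + 3 * X 2 * X 3 * X 4 ^ p - X 3 ^ 3) :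
    Ideal.Quotient.mk (Ideal.span {f₁, f₂}) (X 4) ∈
      nonZeroDivisors (MvPolynomial (Fin 7) F ⧸ Ideal.span {f₁, f₂}) := by
  obtain ⟨B, _, ι, x, y, hx, hy, hreg, hlift⟩ := exists_root_tower hp
    (X 3 ^ 2 - 2 * X 2 * X 4 ^ p : MvPolynomial (Fin 5) F)
    (X 3 ^ 3 + 3 * X 1 * X 4 ^ (2 * p) - 3 * X 2 * X 3 * X 4 ^ p)
  simp only [map_sub, map_add, map_mul, map_pow, map_ofNat] at hx hy
  obtain ⟨θ₀, hθC, hθX⟩ := exists_polynomial_hom (ι.comp C)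
    ![ι (X 0), ι (X 1), ι (X 2), ι (X 3), ι (X 4), x, y]
  obtain ⟨θ, hθ⟩ := exists_quotient_hom (f₁ := f₁) (f₂ := f₂) θ₀
    (by
      simp only [hf₁, map_sub, map_add, map_mul, map_pow, map_ofNat, hθX, Matrix.cons_val]
      linear_combination hx)
    (by
      simp only [hf₂, map_sub, map_add, map_mul, map_pow, map_ofNat, hθX, Matrix.cons_val]
      linear_combination hy)
  have hq₁ : Ideal.Quotient.mk (Ideal.span {f₁, f₂}) f₁ = 0 :=
    Ideal.Quotient.eq_zero_iff_mem.mpr (Ideal.subset_span (by simp))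
  have hq₂ : Ideal.Quotient.mk (Ideal.span {f₁, f₂}) f₂ = 0 :=
    Ideal.Quotient.eq_zero_iff_mem.mpr (Ideal.subset_span (by simp))
  obtain ⟨q, hq⟩ : ∃ q, q = Ideal.Quotient.mk (Ideal.span {f₁, f₂}) := ⟨_, rfl⟩
  rw [← hq] at hθ hq₁ hq₂ ⊢
  simp only [hf₁, hf₂, map_sub, map_add, map_mul, map_pow, map_ofNat] at hq₁ hq₂
  -- A left inverse of `θ`, which shows that `θ` is injective.
  obtain ⟨φ, hφC, hφX⟩ := exists_polynomial_hom (q.comp C)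
    ![q (X 0), q (X 1), q (X 2), q (X 3), q (X 4)]
  obtain ⟨κ, hκι, hκx, hκy⟩ := hlift _ φ (q (X 5)) (q (X 6))
    (by
      simp only [map_sub, map_mul, map_pow, map_ofNat, hφX, Matrix.cons_val]
      linear_combination hq₁)
    (by
      simp only [map_sub, map_add, map_mul, map_pow, map_ofNat, hφX, Matrix.cons_val]
      linear_combination hq₂)
  have hκθ : κ.comp θ = RingHom.id _ := by
    refine Ideal.Quotient.ringHom_ext (MvPolynomial.ringHom_ext ?_ ?_) <;> rw [← hq]
    · intro r
      simp [hθ, hθC, hκι, hφC]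
    · intro i
      fin_cases i <;> simp [hθ, hθX, hκι, hφX, hκx, hκy]
  refine mem_nonZeroDivisors_iff_right.mpr fun s hs => ?_
  -- `θ` carries `t₅` into the base ring of the tower, where nonzero elements are regular.
  have hθs : θ s = 0 := by
    refine hreg (X 4) (X_ne_zero _) _ ?_
    have := congrArg θ hs
    rwa [map_mul, map_zero, mul_comm, hθ, hθX] at this
  calc s = κ (θ s) := (RingHom.congr_fun hκθ s).symm
    _ = 0 := by rw [hθs, map_zero]

/-- Solving the two relations for `t₃` and `t₂` identifies `S[1/t₅]` with
`F[t₁, t₄, t₅, t₆, t₇][1/t₅]`; the five variables are numbered `0, …, 4` in this order. -/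
lemma nonempty_localizationEquiv (h2 : (2 : F) ≠ 0) (h3 : (3 : F) ≠ 0)
    (hf₁ : f₁ = X 5 ^ p - X 3 ^ 2 + 2 * X 2 * X 4 ^ p)
    (hf₂ : f₂ = X 6 ^ p - 3 * X 1 * X 4 ^ (2 * p) + 3 * X 2 * X 3 * X 4 ^ p - X 3 ^ 3)
    (L M : Type*) [CommRing L] [CommRing M] [Algebra (MvPolynomial (Fin 5) F) L]
    [IsLocalization.Away (X 2 : MvPolynomial (Fin 5) F) L]
    [Algebra (MvPolynomial (Fin 7) F ⧸ Ideal.span {f₁, f₂}) M]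
    [IsLocalization.Away (Ideal.Quotient.mk (Ideal.span {f₁, f₂}) (X 4)) M] :
    Nonempty (L ≃+* M) := by
  obtain ⟨j, hj⟩ : ∃ j, j = algebraMap (MvPolynomial (Fin 5) F) L := ⟨_, rfl⟩
  obtain ⟨k, hk⟩ : ∃ k, k = (algebraMap _ M).comp (Ideal.Quotient.mk (Ideal.span {f₁, f₂})) :=
    ⟨_, rfl⟩
  obtain ⟨u, hu⟩ : ∃ u : L, j (X 2) * u = 1 := by
    rw [hj]
    exact ⟨_, IsLocalization.Away.mul_invSelf _⟩
  have hk₁ : k f₁ = 0 := by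
    have : Ideal.Quotient.mk (Ideal.span {f₁, f₂}) f₁ = 0 :=
      Ideal.Quotient.eq_zero_iff_mem.mpr (Ideal.subset_span (by simp))
    rw [hk, RingHom.comp_apply, this, map_zero]
  have hk₂ : k f₂ = 0 := by
    have : Ideal.Quotient.mk (Ideal.span {f₁, f₂}) f₂ = 0 :=
      Ideal.Quotient.eq_zero_iff_mem.mpr (Ideal.subset_span (by simp))
    rw [hk, RingHom.comp_apply, this, map_zero]
  simp only [hf₁, hf₂, map_sub, map_add, map_mul, map_pow, map_ofNat] at hk₁ hk₂
  have two_L : (2 : L) * j (C 2⁻¹) = 1 := ofNat_mul_map_C_inv j h2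
  have three_L : (3 : L) * j (C 3⁻¹) = 1 := ofNat_mul_map_C_inv j h3
  have two_M : (2 : M) * k (C 2⁻¹) = 1 := ofNat_mul_map_C_inv k h2
  have three_M : (3 : M) * k (C 3⁻¹) = 1 := ofNat_mul_map_C_inv k h3
  have hup : j (X 2) ^ p * u ^ p = 1 := by rw [← mul_pow, hu, one_pow]
  -- The images of `t₃` and `t₂`, found by solving `f₁ = 0` and then `f₂ = 0`.
  obtain ⟨w₃, hw₃⟩ : ∃ w₃, w₃ = j (C 2⁻¹) * u ^ p * (j (X 1) ^ 2 - j (X 3) ^ p) := ⟨_, rfl⟩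
  obtain ⟨w₂, hw₂⟩ : ∃ w₂, w₂ = j (C 3⁻¹) * (u ^ p) ^ 2 *
    (j (X 4) ^ p + 3 * w₃ * j (X 1) * j (X 2) ^ p - j (X 1) ^ 3) := ⟨_, rfl⟩
  obtain ⟨α₀, hαC, hαX⟩ := exists_polynomial_hom (j.comp C)
    ![j (X 0), w₂, w₃, j (X 1), j (X 2), j (X 3), j (X 4)]
  have hα₁ : α₀ f₁ = 0 := by
    simp only [hf₁, map_sub, map_add, map_mul, map_pow, map_ofNat, hαX, Matrix.cons_val]
    linear_combination 2 * j (X 2) ^ p * hw₃ +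
      (j (X 1) ^ 2 - j (X 3) ^ p) * (j (X 2) ^ p * u ^ p) * two_L +
      (j (X 1) ^ 2 - j (X 3) ^ p) * hup
  have hα₂ : α₀ f₂ = 0 := by
    simp only [hf₂, map_sub, map_add, map_mul, map_pow, map_ofNat, hαX, Matrix.cons_val]
    rw [mul_comm 2 p, pow_mul]
    linear_combination -3 * (j (X 2) ^ p) ^ 2 * hw₂ -
      (j (X 4) ^ p + 3 * w₃ * j (X 1) * j (X 2) ^ p - j (X 1) ^ 3) *
      ((j (X 2) ^ p * u ^ p) ^ 2 * three_L + (j (X 2) ^ p * u ^ p + 1) * hup)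
  obtain ⟨α₁, hα⟩ := exists_quotient_hom α₀ hα₁ hα₂
  obtain ⟨α, hαk⟩ : ∃ α : M →+* L, ∀ x, α (k x) = α₀ x := by
    have hunit : IsUnit (α₁ (Ideal.Quotient.mk (Ideal.span {f₁, f₂}) (X 4))) := by
      rw [hα, hαX]
      exact IsUnit.of_mul_eq_one u hu
    refine ⟨IsLocalization.Away.lift _ hunit, fun x => ?_⟩
    rw [hk, RingHom.comp_apply, IsLocalization.Away.lift_eq, hα]
  obtain ⟨β₀, hβC, hβX⟩ := exists_polynomial_hom (k.comp C)
    ![k (X 0), k (X 3), k (X 4), k (X 5), k (X 6)]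
  obtain ⟨β, hβj⟩ : ∃ β : L →+* M, ∀ x, β (j x) = β₀ x := by
    have hunit : IsUnit (β₀ (X 2)) := by
      rw [hβX, hk]
      exact IsLocalization.Away.algebraMap_isUnit _
    refine ⟨IsLocalization.Away.lift _ hunit, fun x => ?_⟩
    rw [hj, IsLocalization.Away.lift_eq]
  have hβu : k (X 4) ^ p * β u ^ p = 1 := by
    have := congrArg β hup
    simpa only [map_mul, map_pow, map_one, hβj, hβX, Matrix.cons_val] using this
  have hβw₃ : β w₃ = k (X 2) := by
    simp only [hw₃, map_mul, map_sub, map_pow, hβj, hβX, hβC, Matrix.cons_val, RingHom.comp_apply]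
    linear_combination (-k (C 2⁻¹) * β u ^ p) * hk₁ +
      k (X 2) * (k (X 4) ^ p * β u ^ p) * two_M + k (X 2) * hβu
  have hβw₂ : β w₂ = k (X 1) := by
    rw [mul_comm 2 p, pow_mul] at hk₂
    simp only [hw₂, map_mul, map_sub, map_add, map_pow, map_ofNat, hβw₃, hβj, hβX, hβC,
      Matrix.cons_val, RingHom.comp_apply]
    linear_combination (k (C 3⁻¹) * (β u ^ p) ^ 2) * hk₂ +
      k (X 1) * ((k (X 4) ^ p * β u ^ p) ^ 2 * three_M + (k (X 4) ^ p * β u ^ p + 1) * hβu)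
  have hαβ : α.comp β = RingHom.id L := by
    refine IsLocalization.ringHom_ext (Submonoid.powers (X 2 : MvPolynomial (Fin 5) F)) ?_
    rw [← hj]
    refine MvPolynomial.ringHom_ext ?_ ?_
    · intro r
      simp [hβj, hβC, hαk, hαC]
    · intro i
      fin_cases i <;> simp [hβj, hβX, hαk, hαX]
  have hβα : β.comp α = RingHom.id M := by
    refine IsLocalization.ringHom_ext (Submonoid.powers
      (Ideal.Quotient.mk (Ideal.span {f₁, f₂}) (X 4))) (Ideal.Quotient.ringHom_ext ?_)
    rw [RingHom.comp_assoc, RingHom.id_comp, ← hk]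
    refine MvPolynomial.ringHom_ext ?_ ?_
    · intro r
      simp [hαk, hαC, hβj, hβC]
    · intro i
      fin_cases i <;> simp [hαk, hαX, hβj, hβX, hβw₂, hβw₃]
  exact ⟨RingEquiv.ofRingHom β α hβα hαβ⟩

end

end QuotientG55

/-- Let `p ≥ 5` be a prime, `F` a field of characteristic `p`,
`R = F[t₁,…,t₇]`, `f₁ = t₆^p − t₄² + 2t₃t₅^p` and
`f₂ = t₇^p − 3t₂t₅^{2p} + 3t₃t₄t₅^p − t₄³`.  Then `S = R/(f₁,f₂)` is a domain, and the
localization of `S` away from the image of `t₅` is an integrally closed domain. -/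
theorem quotient_g55_two_relations_localization_isIntegrallyClosed
    (p : ℕ) (hp : p.Prime) (hp5 : 5 ≤ p)
    (F : Type*) [Field F] [CharP F p]
    (f₁ f₂ : MvPolynomial (Fin 7) F)
    (hf₁ : f₁ = X 5 ^ p - X 3 ^ 2 + 2 * X 2 * X 4 ^ p)
    (hf₂ : f₂ = X 6 ^ p - 3 * X 1 * X 4 ^ (2 * p) + 3 * X 2 * X 3 * X 4 ^ p - X 3 ^ 3) :
    IsDomain (MvPolynomial (Fin 7) F ⧸ Ideal.span {f₁, f₂}) ∧
      IsDomain (Localization.Away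
        (Ideal.Quotient.mk (Ideal.span {f₁, f₂}) (X 4))) ∧
      IsIntegrallyClosed (Localization.Away
        (Ideal.Quotient.mk (Ideal.span {f₁, f₂}) (X 4))) := by
  have hne (n : ℕ) (hn : 0 < n) (hn5 : n < 5) : (n : F) ≠ 0 := fun h0 =>
    absurd (Nat.le_of_dvd hn ((CharP.cast_eq_zero_iff F p n).mp h0)) (by omega)
  have h2 : (2 : F) ≠ 0 := by exact_mod_cast hne 2 (by norm_num) (by norm_num)
  have h3 : (3 : F) ≠ 0 := by exact_mod_cast hne 3 (by norm_num) (by norm_num)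
  obtain ⟨e⟩ := QuotientG55.nonempty_localizationEquiv h2 h3 hf₁ hf₂
    (Localization.Away (X 2 : MvPolynomial (Fin 5) F))
    (Localization.Away (Ideal.Quotient.mk (Ideal.span {f₁, f₂}) (X 4)))
  have hle : Submonoid.powers (X 2 : MvPolynomial (Fin 5) F) ≤ nonZeroDivisors _ :=
    powers_le_nonZeroDivisors_of_noZeroDivisors (X_ne_zero _)
  have hL : IsDomain (Localization.Away (X 2 : MvPolynomial (Fin 5) F)) :=
    IsLocalization.isDomain_localization hle
  have hLc : IsIntegrallyClosed (Localization.Away (X 2 : MvPolynomial (Fin 5) F)) :=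
    isIntegrallyClosed_of_isLocalization _ (Submonoid.powers (X 2)) hle
  have hM := e.symm.toMulEquiv.isDomain
  -- `S` embeds in the domain `S[1/t₅]` because `t₅` is a nonzerodivisor.
  refine ⟨?_, hM, IsIntegrallyClosed.of_equiv e⟩
  exact (IsLocalization.injective (Localization.Away
    (Ideal.Quotient.mk (Ideal.span {f₁, f₂}) (X 4))) (Submonoid.powers_le.mpr
      (QuotientG55.mk_X_four_mem_nonZeroDivisors hp.ne_zero hf₁ hf₂))).isDomain (algebraMap _ _)
end

section
/- Let p ≥ 3 be a prime and F a field of characteristic p. Let R = F[t₁,…,t₈] be the polynomial ring in eight variables and let f₁ = t₇^p − t₃² + 2t₂t₅ and f₂ = t₈^p − t₃t₆^p + t₄t₅. Then the quotient ring S = R/(f₁, f₂) is an integral domain, and the localization of S at the multiplicative set generated by the image of t₅ is an integral domain that is integrally closed in its field of fractions. -/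
open MvPolynomial

/-!
Write `t = t₅`.  Once `t` is inverted, the two relations can be solved for
`t₂ = (t₃² - t₇^p) / (2t)` and `t₄ = (t₃t₆^p - t₈^p) / t`, so `S[1/t]` is `P[1/t]` with `P` the
polynomial ring in the six remaining variables: a localization of a factorial ring, hence an
integrally closed domain (`quotient_localization_of_parametrization`).

That `S` itself is a domain amounts to the injectivity of `S → S[1/t]`, i.e. to `t` being a
nonzerodivisor on `S`.  By `mem_of_mul_mem_span_pair` it suffices that `t` is prime, `t ∤ f₁` and
`f₂` is a nonzerodivisor modulo `(t, f₁)`.  The last point holds since `t` and `f₁` do not involve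
`t₈`, while `f₂` is monic in `t₈` (`mem_map_C_of_monic_mul_mem`).
-/

/-- If `φ : R → P[1/s]` kills `I` and restricts along `ψ : P → R` to the localization map, if every element of
`R` becomes an element of `ψ P` modulo `I` after multiplication by a power of `t = ψ s`, and if `t`
is a nonzerodivisor modulo `I`, then `R ⧸ I` embeds in `P[1/s]` and `(R ⧸ I)[1/t] ≃ P[1/s]`. -/
lemma quotient_localization_of_parametrization {R P : Type*} [CommRing R] [CommRing P] [IsDomain P]
    [IsIntegrallyClosed P] (I : Ideal R) (t : R) (s : P) (hs : s ≠ 0)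
    (ψ : P →+* R) (hψ : ψ s = t) (φ : R →+* Localization.Away s)
    (hφψ : ∀ q, φ (ψ q) = algebraMap P _ q) (hI : ∀ r ∈ I, φ r = 0)
    (hred : ∀ r, ∃ n : ℕ, ∃ q, t ^ n * r - ψ q ∈ I)
    (hsat : ∀ g, t * g ∈ I → g ∈ I) :
    IsDomain (R ⧸ I) ∧ IsDomain (Localization.Away (Ideal.Quotient.mk I t)) ∧
      IsIntegrallyClosed (Localization.Away (Ideal.Quotient.mk I t)) := by
  have hle : Submonoid.powers s ≤ nonZeroDivisors P :=
    powers_le_nonZeroDivisors_of_noZeroDivisors hs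
  have : IsDomain (Localization.Away s) := IsLocalization.isDomain_localization hle
  have : IsIntegrallyClosed (Localization.Away s) :=
    isIntegrallyClosed_of_isLocalization _ (Submonoid.powers s) hle
  have hφt : φ t = algebraMap P _ s := by rw [← hψ, hφψ]
  have hsatn : ∀ (n : ℕ) g, t ^ n * g ∈ I → g ∈ I := by
    intro n
    induction n with
    | zero => intro g hg; simpa using hg
    | succ k ih => intro g hg; exact hsat g (ih _ (by rwa [pow_succ, mul_assoc] at hg))
  have hker : ∀ r, φ r = 0 → r ∈ I := by
    intro r hr
    obtain ⟨n, q, hq⟩ := hred r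
    have h := hI _ hq
    rw [map_sub, map_mul, hr, mul_zero, hφψ, zero_sub, neg_eq_zero] at h
    have hq0 : q = 0 := IsLocalization.injective (Localization.Away s) hle (by rw [h, map_zero])
    rw [hq0, map_zero, sub_zero] at hq
    exact hsatn n r hq
  let Φ : R ⧸ I →+* Localization.Away s := Ideal.Quotient.lift I φ hI
  have hΦ : Function.Injective Φ :=
    RingHom.lift_injective_of_ker_le_ideal I hI fun r hr => hker r hr
  let : Algebra (R ⧸ I) (Localization.Away s) := Φ.toAlgebra
  have hloc : IsLocalization.Away (Ideal.Quotient.mk I t) (Localization.Away s) := by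
    refine (isLocalization_iff _ _).2 ⟨?_, ?_, ?_⟩
    · rintro ⟨_, n, rfl⟩
      have h : IsUnit (φ t) := by
        rw [hφt]; exact IsLocalization.Away.algebraMap_isUnit s
      have h2 : IsUnit (Φ (Ideal.Quotient.mk I t ^ n)) := by
        rw [map_pow]; exact h.pow n
      exact h2
    · intro z
      obtain ⟨⟨q, ⟨_, n, rfl⟩⟩, hz⟩ := IsLocalization.surj (Submonoid.powers s) z
      refine ⟨⟨Ideal.Quotient.mk I (ψ q), ⟨_, n, rfl⟩⟩, ?_⟩
      change z * Φ (Ideal.Quotient.mk I t ^ n) = φ (ψ q)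
      rw [map_pow, hφψ]
      change z * (φ t) ^ n = _
      rw [hφt, ← map_pow]
      exact hz
    · intro x y h
      exact ⟨1, by rw [hΦ h]⟩
  let e : Localization.Away s ≃+* Localization.Away (Ideal.Quotient.mk I t) :=
    (IsLocalization.algEquiv (Submonoid.powers (Ideal.Quotient.mk I t)) (Localization.Away s)
      (Localization.Away (Ideal.Quotient.mk I t))).toRingEquiv
  exact ⟨hΦ.isDomain Φ, e.symm.toMulEquiv.isDomain _, IsIntegrallyClosed.of_equiv e⟩

/-- A prime `t` is a nonzerodivisor modulo `(f₁, f₂)` as soon as `t, f₁, f₂` is a regular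
sequence. -/
lemma mem_of_mul_mem_span_pair {R : Type*} [CommRing R] [IsDomain R] {t f₁ f₂ : R} (ht : Prime t)
    (h₁ : ¬ t ∣ f₁) (h₂ : ∀ b, f₂ * b ∈ Ideal.span {t, f₁} → b ∈ Ideal.span {t, f₁})
    (g : R) (hg : t * g ∈ Ideal.span {f₁, f₂}) : g ∈ Ideal.span {f₁, f₂} := by
  obtain ⟨a, b, hab⟩ := Ideal.mem_span_pair.1 hg
  obtain ⟨u, c, huc⟩ := Ideal.mem_span_pair.1
    (h₂ b (Ideal.mem_span_pair.2 ⟨g, -a, by linear_combination -hab⟩))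
  have hdvd : t ∣ f₁ * (a + c * f₂) :=
    ⟨g - u * f₂, by linear_combination hab + f₂ * huc⟩
  obtain ⟨v, hv⟩ := (ht.dvd_or_dvd hdvd).resolve_left h₁
  refine Ideal.mem_span_pair.2 ⟨v, u, mul_left_cancel₀ ht.ne_zero ?_⟩
  linear_combination hab + f₂ * huc - f₁ * hv

/-- A monic polynomial over `A` stays a nonzerodivisor over `A ⧸ J`. -/
lemma mem_map_C_of_monic_mul_mem {A : Type*} [CommRing A] (J : Ideal A) {m : Polynomial A}
    (hm : m.Monic) (b : Polynomial A) (h : m * b ∈ J.map Polynomial.C) :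
    b ∈ J.map Polynomial.C := by
  have key : ∀ q : Polynomial A,
      q ∈ J.map Polynomial.C ↔ q.map (Ideal.Quotient.mk J) = 0 := by
    intro q
    rw [Ideal.mem_map_C_iff, Polynomial.ext_iff]
    simp [Polynomial.coeff_map, Ideal.Quotient.eq_zero_iff_mem]
  rw [key] at h ⊢
  rw [Polynomial.map_mul] at h
  exact (hm.map _).mul_right_eq_zero_iff.1 h

/-- `f₂` is a nonzerodivisor modulo `(t₅, f₁)`, being monic in `t₈`. -/
lemma mem_span_of_f₂_mul_mem {F : Type*} [Field F] {p : ℕ} (hp0 : p ≠ 0)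
    (b : MvPolynomial (Fin 8) F)
    (h : (X 7 ^ p - X 2 * X 5 ^ p + X 3 * X 4) * b ∈
      Ideal.span {(X 4 : MvPolynomial (Fin 8) F), X 6 ^ p - X 2 ^ 2 + 2 * X 1 * X 4}) :
    b ∈ Ideal.span {(X 4 : MvPolynomial (Fin 8) F), X 6 ^ p - X 2 ^ 2 + 2 * X 1 * X 4} := by
  -- The cyclic shift of the indices makes `t₈` the variable that `finSuccEquiv` splits off.
  let e : MvPolynomial (Fin 8) F ≃ₐ[F] Polynomial (MvPolynomial (Fin 7) F) :=
    (renameEquiv F (finRotate 8)).trans (finSuccEquiv F 7)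
  have e7 : e (X 7) = Polynomial.X := by
    have : finRotate 8 7 = 0 := by decide
    simp [e, this, finSuccEquiv_X_zero]
  have eX : ∀ i : Fin 7, e (X i.castSucc) = Polynomial.C (X i) := by
    intro i
    have : finRotate 8 i.castSucc = i.succ := by revert i; decide
    simp only [e, AlgEquiv.trans_apply, renameEquiv_apply, rename_X, this, finSuccEquiv_X_succ]
  have e1 : e (X 1) = Polynomial.C (X 1) := eX 1
  have e2 : e (X 2) = Polynomial.C (X 2) := eX 2
  have e3 : e (X 3) = Polynomial.C (X 3) := eX 3
  have e4 : e (X 4) = Polynomial.C (X 4) := eX 4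
  have e5 : e (X 5) = Polynomial.C (X 5) := eX 5
  have e6 : e (X 6) = Polynomial.C (X 6) := eX 6
  let J : Ideal (MvPolynomial (Fin 7) F) :=
    Ideal.span {X 4, X 6 ^ p - X 2 ^ 2 + 2 * X 1 * X 4}
  have hmap : (Ideal.span {(X 4 : MvPolynomial (Fin 8) F),
      X 6 ^ p - X 2 ^ 2 + 2 * X 1 * X 4}).map e = J.map Polynomial.C := by
    simp only [J, Ideal.map_span, Set.image_pair, map_add, map_sub, map_mul, map_pow,
      map_ofNat, e1, e2, e4, e6]
  have hmem : ∀ q, q ∈ Ideal.span {(X 4 : MvPolynomial (Fin 8) F),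
      X 6 ^ p - X 2 ^ 2 + 2 * X 1 * X 4} ↔ e q ∈ J.map Polynomial.C := by
    intro q
    rw [← hmap, Ideal.mem_map_of_equiv]
    simp
  rw [hmem] at h ⊢
  rw [map_mul] at h
  refine mem_map_C_of_monic_mul_mem J ?_ _ h
  have : e (X 7 ^ p - X 2 * X 5 ^ p + X 3 * X 4) =
      Polynomial.X ^ p + Polynomial.C (- (X 2 * X 5 ^ p) + X 3 * X 4) := by
    simp only [map_add, map_sub, map_mul, map_pow, map_neg, e2, e3, e4, e5, e7]
    ring
  rw [this]
  exact Polynomial.monic_X_pow_add_C _ hp0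

/-- Let `p ≥ 3` be a prime, `F` a field of characteristic `p`,
`R = F[t₁,…,t₈]`, `f₁ = t₇^p − t₃² + 2t₂t₅` and `f₂ = t₈^p − t₃t₆^p + t₄t₅`.  Then
`S = R/(f₁,f₂)` is a domain, and the localization of `S` away from the image of `t₅` is an
integrally closed domain. -/
theorem quotient_g625_relations_localization_isIntegrallyClosed
    (p : ℕ) (hp : p.Prime) (hp3 : 3 ≤ p)
    (F : Type*) [Field F] [CharP F p]
    (f₁ f₂ : MvPolynomial (Fin 8) F)
    (hf₁ : f₁ = X 6 ^ p - X 2 ^ 2 + 2 * X 1 * X 4)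
    (hf₂ : f₂ = X 7 ^ p - X 2 * X 5 ^ p + X 3 * X 4) :
    IsDomain (MvPolynomial (Fin 8) F ⧸ Ideal.span {f₁, f₂}) ∧
      IsDomain (Localization.Away
        (Ideal.Quotient.mk (Ideal.span {f₁, f₂}) (X 4))) ∧
      IsIntegrallyClosed (Localization.Away
        (Ideal.Quotient.mk (Ideal.span {f₁, f₂}) (X 4))) := by
  have hp0 : p ≠ 0 := hp.ne_zero
  have h2 : (2 : F) ≠ 0 := Ring.two_ne_zero (by rw [ringChar.eq F p]; omega)
  -- The variables of `Fin 6` stand for `t₁, t₃, t₅, t₆, t₇, t₈`, in this order.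
  let s : MvPolynomial (Fin 6) F := X 2
  let ψ : MvPolynomial (Fin 6) F →ₐ[F] MvPolynomial (Fin 8) F :=
    aeval ![X 0, X 2, X 4, X 5, X 6, X 7]
  let ι : MvPolynomial (Fin 6) F →ₐ[F] Localization.Away s := Algebra.algHom F _ _
  let w : Localization.Away s := IsLocalization.Away.invSelf s
  have hw : ι (X 2) * w = 1 := IsLocalization.Away.mul_invSelf s
  let a₂ : MvPolynomial (Fin 6) F := C (2⁻¹) * (X 1 ^ 2 - X 4 ^ p)
  let a₄ : MvPolynomial (Fin 6) F := X 1 * X 3 ^ p - X 5 ^ p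
  let φ : MvPolynomial (Fin 8) F →ₐ[F] Localization.Away s :=
    aeval ![ι (X 0), ι a₂ * w, ι (X 1), ι a₄ * w, ι (X 2), ι (X 3), ι (X 4), ι (X 5)]
  have hC : ∀ {σ : Type}, (2 : MvPolynomial σ F) * C 2⁻¹ = 1 := by
    intro σ
    rw [← map_ofNat (C : F →+* MvPolynomial σ F) 2, ← map_mul, mul_inv_cancel₀ h2, map_one]
  have hφψ : φ.comp ψ = ι := by
    apply MvPolynomial.algHom_ext
    intro i
    fin_cases i <;> simp [φ, ψ]
  have hφ₁ : φ f₁ = 0 := by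
    have h := congrArg ι (hC (σ := Fin 6))
    simp only [map_mul, map_ofNat, map_one] at h
    rw [hf₁]
    simp [φ, a₂] at h ⊢
    linear_combination (ι (X 1) ^ 2 - ι (X 4) ^ p) * (ι (X 2) * w * h + hw)
  have hφ₂ : φ f₂ = 0 := by
    rw [hf₂]
    simp [φ, a₄]
    linear_combination (ι (X 1) * ι (X 3) ^ p - ι (X 5) ^ p) * hw
  refine quotient_localization_of_parametrization _ (X 4) s (X_ne_zero _) ψ.toRingHom ?_
    φ.toRingHom (fun q => DFunLike.congr_fun hφψ q) ?_ ?_ ?_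
  · simp [ψ, s]
  · intro r hr
    have : Ideal.span {f₁, f₂} ≤ RingHom.ker φ.toRingHom := by
      rw [Ideal.span_le]
      rintro x (rfl | rfl)
      · exact hφ₁
      · exact hφ₂
    exact this hr
  · change ∀ r, ∃ n : ℕ, ∃ q, X 4 ^ n * r - ψ q ∈ Ideal.span {f₁, f₂}
    have hψs : ψ s = X 4 := by simp [ψ, s]
    have hvar : ∀ i : Fin 8, ∃ n : ℕ, ∃ q, X 4 ^ n * X i - ψ q ∈ Ideal.span {f₁, f₂} := by
      have hz : ∀ (i : Fin 8) (j : Fin 6), ψ (X j) = X i →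
          ∃ n : ℕ, ∃ q, X 4 ^ n * X i - ψ q ∈ Ideal.span {f₁, f₂} := by
        intro i j h
        exact ⟨0, X j, by simp [h]⟩
      intro i
      fin_cases i
      · exact hz 0 0 (by simp [ψ])
      · refine ⟨1, a₂, Ideal.mem_span_pair.2 ⟨C 2⁻¹, 0, ?_⟩⟩
        rw [hf₁]
        simp [ψ, a₂]
        linear_combination (X 1 * X 4 : MvPolynomial (Fin 8) F) * hC (σ := Fin 8)
      · exact hz 2 1 (by simp [ψ])
      · refine ⟨1, a₄, Ideal.mem_span_pair.2 ⟨0, 1, ?_⟩⟩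
        rw [hf₂]
        simp [ψ, a₄]
        ring
      · exact hz 4 2 (by simp [ψ])
      · exact hz 5 3 (by simp [ψ])
      · exact hz 6 4 (by simp [ψ])
      · exact hz 7 5 (by simp [ψ])
    intro r
    induction r using MvPolynomial.induction_on with
    | C a => exact ⟨0, C a, by simp [ψ, MvPolynomial.algebraMap_eq]⟩
    | add r₁ r₂ ih₁ ih₂ =>
      obtain ⟨n, q, hq⟩ := ih₁
      obtain ⟨m, q', hq'⟩ := ih₂
      refine ⟨n + m, s ^ m * q + s ^ n * q', ?_⟩
      have := add_mem (Ideal.mul_mem_left _ (X 4 ^ m) hq) (Ideal.mul_mem_left _ (X 4 ^ n) hq')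
      convert this using 1
      simp only [map_add, map_mul, map_pow, hψs]
      ring
    | mul_X r i ih =>
      obtain ⟨n, q, hq⟩ := ih
      obtain ⟨m, q', hq'⟩ := hvar i
      refine ⟨n + m, q * q', ?_⟩
      have := add_mem (Ideal.mul_mem_left _ (X 4 ^ m * X i) hq) (Ideal.mul_mem_left _ (ψ q) hq')
      convert this using 1
      simp only [map_mul]
      ring
  · refine mem_of_mul_mem_span_pair (X_prime (i := 4)) ?_ ?_
    · -- At the point with `t₇ = 1` and all other coordinates `0`, `f₁` is `1` and `t₅` is `0`.
      rintro ⟨c, hc⟩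
      have := congrArg (aeval (Pi.single 6 1 : Fin 8 → F)) hc
      simp [hf₁] at this
    · rw [hf₁, hf₂]
      exact mem_span_of_f₂_mul_mem hp0
end

section
/- Let F be a field of prime characteristic p and let ε ∈ F. Consider the polynomial ring F[x₁,…,x₆] with partial derivative operators ∂ᵢ = ∂/∂xᵢ. Then the set of f ∈ F[x₁,…,x₆] satisfying the four equations x₅∂₂f + x₆∂₃f = 0, −x₅∂₁f + εx₆∂₄f = 0, −x₆∂₁f + x₅∂₄f = 0, and −εx₆∂₂f − x₅∂₃f = 0 equals the F-subalgebra of F[x₁,…,x₆] generated by x₁^p, x₂^p, x₃^p, x₄^p, x₅, x₆. (These equations express invariance under the adjoint action of the Lie algebra g₆,₂₂(ε) with brackets [x₁,x₂]=x₅, [x₁,x₃]=x₆, [x₂,x₄]=εx₆, [x₃,x₄]=x₅.) -/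
/-!
The first and fourth equations form a linear system in `(∂₂f, ∂₃f)` and the second and third one in
`(∂₁f, ∂₄f)`; up to sign, both have determinant `x₅² - ε x₆²`, a nonzero polynomial whatever `ε` is.
So the equations hold exactly when `∂₁f = ∂₂f = ∂₃f = ∂₄f = 0`. In characteristic `p`, `∂ᵢf = 0`
means that `p` divides the exponent of `xᵢ` in every monomial of `f`, and such monomials are
products of the given generators. Conversely, the four derivations kill every generator.
-/

open MvPolynomial

/-- The common determinant `x₅² - ε x₆²` is nonzero: it takes the value `1` at `x₅ = 1`, `x₆ = 0`. -/
lemma det_ne_zero {F : Type*} [Field F] (ε : F) :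
    (X 4 * X 4 - C ε * X 5 * X 5 : MvPolynomial (Fin 6) F) ≠ 0 := by
  intro h
  have := congrArg (eval (fun i : Fin 6 => if i = 4 then (1 : F) else 0)) h
  simp at this

lemma dvd_of_pderiv_eq_zero {σ F : Type*} [Field F] (p : ℕ) [CharP F p]
    {f : MvPolynomial σ F} {i : σ} (h : pderiv i f = 0) {m : σ →₀ ℕ} (hm : m ∈ f.support) :
    p ∣ m i := by
  classical
  rcases Nat.eq_zero_or_pos (m i) with h0 | h0
  · simp [h0]
  have hle : Finsupp.single i 1 ≤ m := Finsupp.single_le_iff.mpr h0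
  have hc := congrArg (coeff (m - Finsupp.single i 1)) h
  rw [coeff_pderiv, tsub_add_cancel_of_le hle, coeff_zero] at hc
  have h2 := (mul_eq_zero.mp hc).resolve_left (mem_support_iff.mp hm)
  rw [← CharP.cast_eq_zero_iff F p, ← h2]
  rw [Finsupp.tsub_apply, Finsupp.single_eq_same]
  exact_mod_cast congrArg (Nat.cast (R := F)) (Nat.sub_add_cancel h0).symm

theorem invariants_g622
    (F : Type*) [Field F] (p : ℕ) (hp : p.Prime) [CharP F p] (ε : F) :
    {f : MvPolynomial (Fin 6) F |
        X 4 * pderiv 1 f + X 5 * pderiv 2 f = 0 ∧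
        -(X 4) * pderiv 0 f + C ε * X 5 * pderiv 3 f = 0 ∧
        -(X 5) * pderiv 0 f + X 4 * pderiv 3 f = 0 ∧
        -(C ε * X 5) * pderiv 1 f - X 4 * pderiv 2 f = 0} =
      (Algebra.adjoin F {(X 0 : MvPolynomial (Fin 6) F) ^ p, X 1 ^ p, X 2 ^ p, X 3 ^ p,
        X 4, X 5} : Subalgebra F (MvPolynomial (Fin 6) F)) := by
  ext f
  simp only [Set.mem_ofPred_eq, SetLike.mem_coe]
  constructor
  · rintro ⟨h1, h2, h3, h4⟩
    have hd := det_ne_zero ε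
    -- Cramer's rule for each of the two systems.
    have d0 : pderiv 0 f = 0 := (mul_eq_zero.mp (by
      linear_combination -(X 4) * h2 + C ε * X 5 * h3 :
        (X 4 * X 4 - C ε * X 5 * X 5) * pderiv 0 f = 0)).resolve_left hd
    have d3 : pderiv 3 f = 0 := (mul_eq_zero.mp (by
      linear_combination -(X 5) * h2 + X 4 * h3 :
        (X 4 * X 4 - C ε * X 5 * X 5) * pderiv 3 f = 0)).resolve_left hd
    have d1 : pderiv 1 f = 0 := (mul_eq_zero.mp (by
      linear_combination X 4 * h1 + X 5 * h4 :
        (X 4 * X 4 - C ε * X 5 * X 5) * pderiv 1 f = 0)).resolve_left hd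
    have d2 : pderiv 2 f = 0 := (mul_eq_zero.mp (by
      linear_combination -(C ε * X 5) * h1 - X 4 * h4 :
        (X 4 * X 4 - C ε * X 5 * X 5) * pderiv 2 f = 0)).resolve_left hd
    rw [f.as_sum]
    refine Subalgebra.sum_mem _ fun m hm => ?_
    obtain ⟨a, ha⟩ := dvd_of_pderiv_eq_zero p d0 hm
    obtain ⟨b, hb⟩ := dvd_of_pderiv_eq_zero p d1 hm
    obtain ⟨c, hc⟩ := dvd_of_pderiv_eq_zero p d2 hm
    obtain ⟨d, hd⟩ := dvd_of_pderiv_eq_zero p d3 hm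
    rw [monomial_eq, Finsupp.prod_fintype _ _ (fun _ => pow_zero _), Fin.prod_univ_six,
      ha, hb, hc, hd]
    simp only [pow_mul]
    refine Subalgebra.mul_mem _ (Subalgebra.algebraMap_mem _ _) ?_
    repeat' apply Subalgebra.mul_mem
    all_goals exact Subalgebra.pow_mem _ (Algebra.subset_adjoin (by simp)) _
  · intro hf
    have key : ∀ i : Fin 6, i ≠ 4 → i ≠ 5 → pderiv i f = 0 := by
      intro i hi4 hi5
      induction hf using Algebra.adjoin_induction with
      | mem x hx =>
        simp only [Set.mem_insert_iff, Set.mem_singleton_iff] at hx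
        rcases hx with rfl | rfl | rfl | rfl | rfl | rfl
        · simp
        · simp
        · simp
        · simp
        · exact pderiv_X_of_ne hi4.symm
        · exact pderiv_X_of_ne hi5.symm
      | algebraMap r => exact pderiv_C
      | add x y _ _ hx hy => rw [map_add, hx, hy, add_zero]
      | mul x y _ _ hx hy => rw [pderiv_mul, hx, hy, zero_mul, mul_zero, add_zero]
    simp [key 0 (by decide) (by decide), key 1 (by decide) (by decide),
      key 2 (by decide) (by decide), key 3 (by decide) (by decide)]
end

section
/- Let p ≥ 3 be a prime and F a field of characteristic p. Consider the polynomial ring F[x₁,x₂,x₃,x₄] with partial derivative operators ∂ᵢ = ∂/∂xᵢ. Then the set of f ∈ F[x₁,x₂,x₃,x₄] satisfying x₃∂₂f + x₄∂₃f = 0, x₃∂₁f = 0, and x₄∂₁f = 0 equals the F-subalgebra of F[x₁,x₂,x₃,x₄] generated by x₁^p, x₂^p, x₃^p, x₄, and x₃² − 2x₂x₄. (These equations express invariance under the adjoint action of the Lie algebra g₄ with brackets [x₁,x₂]=x₃, [x₁,x₃]=x₄.) -/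
/-!
Write `A = F[x₁,x₂,x₃,x₄]`, `Δ = x₃² − 2x₂x₄`, `R` for the subalgebra on the right-hand side and
`D = x₃∂₂ + x₄∂₃`, so that the left-hand side is `ker ∂₁ ∩ ker D`. The inclusion `R ⊆ ker` is a
computation on generators. For the converse, let `f` be killed by `∂₁` and `D`. (The variable `xᵢ`
is `X (i - 1)` and `∂ᵢ` is `pderiv (i - 1)`.)

* After inverting `x₄`, `A` is generated by `R`, `x₃` and `x₁`, because `2x₂x₄ = x₃² − Δ`. Hence
  `x₄ᴺ f ∈ R[x₃][x₁]` for some `N`. If `E` is a derivation of a domain of characteristic `p`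
  that kills a subalgebra `K`, and `E s ≠ 0`, `sᵖ ∈ K`, then `K[s] ∩ ker E = K`
  (`mem_of_derivation_eq_zero`): write the element as a polynomial in `s` of degree `< p`, and
  differentiate. This applies to `∂₁` with `s = x₁`, then to `D` with `s = x₃`, and yields
  `x₄ᴺ f ∈ R`.
* `x₄` can be cancelled: `x₄ f ∈ R` implies `f ∈ R` (`mem_of_X_three_mul_mem`). Indeed `R` is spanned
  by `1, Δ, …, Δ^(p-1)` over `R₀ = F[x₁ᵖ,x₂ᵖ,x₃ᵖ,x₄]`, since `Δᵖ = x₃²ᵖ − 2x₂ᵖx₄ᵖ`. Setting `x₄ = 0`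
  sends `Δ` to `x₃²`, whose powers of exponent `< p` are independent over the constants of `∂₃`;
  so if `∑ rᵢ Δⁱ` is divisible by `x₄`, then so is each `rᵢ`, with quotient in `R₀`.
-/

namespace InvariantsG4

/-! ### Derivations on simple extensions of subalgebras -/

open Polynomial in
/-- The subalgebra `K[s]` generated by a subalgebra `K` and an element `s`. -/
noncomputable def ext {F A : Type*} [Field F] [CommRing A] [Algebra F A]
    (K : Subalgebra F A) (s : A) : Subalgebra F A :=
  (aeval s : K[X] →ₐ[K] A).range.restrictScalars F

section General

variable {F A : Type*} [Field F] [CommRing A] [Algebra F A]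

open Polynomial

theorem algebraMap_coe (K : Subalgebra F A) (k : K) : algebraMap K A k = (k : A) := rfl

theorem mem_ext {K : Subalgebra F A} {s g : A} :
    g ∈ ext K s ↔ ∃ P : K[X], aeval s P = g := by
  simp [ext, Subalgebra.mem_restrictScalars, AlgHom.mem_range]

theorem le_ext (K : Subalgebra F A) (s : A) : K ≤ ext K s := fun k hk =>
  mem_ext.2 ⟨C ⟨k, hk⟩, by simp⟩

theorem self_mem_ext (K : Subalgebra F A) (s : A) : s ∈ ext K s := mem_ext.2 ⟨X, by simp⟩

/-- If `sᵖ ∈ K`, elements of `K[s]` are polynomials in `s` of degree `< p`: reduce modulo the monic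
polynomial `Xᵖ − sᵖ`. -/
theorem exists_degree_lt {K : Subalgebra F A} {s g : A} {p : ℕ} (hp : p ≠ 0)
    (hs : s ^ p ∈ K) (hg : g ∈ ext K s) :
    ∃ P : K[X], P.natDegree < p ∧ aeval s P = g := by
  obtain ⟨P, rfl⟩ := mem_ext.1 hg
  have hm : (X ^ p - C (⟨s ^ p, hs⟩ : K)).Monic := monic_X_pow_sub_C _ hp
  refine ⟨P %ₘ (X ^ p - C ⟨s ^ p, hs⟩), ?_, ?_⟩
  · by_cases ht : Nontrivial K
    · have := natDegree_modByMonic_lt P hm (fun h => hp (by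
        have := congrArg natDegree h
        simpa using this))
      simpa using this
    · rw [not_nontrivial_iff_subsingleton] at ht
      rw [Subsingleton.elim (P %ₘ _) 0]
      simpa using Nat.pos_of_ne_zero hp
  · refine aeval_modByMonic_eq_self_of_root ?_
    simp

theorem derivation_aeval {K : Subalgebra F A} (E : Derivation F A A)
    (hE : ∀ k ∈ K, E k = 0) (s : A) (P : K[X]) :
    E (aeval s P) = aeval s (derivative P) * E s := by
  induction P using Polynomial.induction_on' with
  | add P Q hP hQ => simp [hP, hQ, add_mul]
  | monomial n a =>
    have ha : E (a : A) = 0 := hE a a.2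
    simp only [aeval_monomial, algebraMap_coe, derivative_monomial, Derivation.leibniz,
      Derivation.leibniz_pow, smul_eq_mul, ha, nsmul_eq_mul]
    push_cast
    ring

theorem derivation_ext_eq_zero {K : Subalgebra F A} (E : Derivation F A A)
    (hE : ∀ k ∈ K, E k = 0) {s : A} (hs : E s = 0) {g : A} (hg : g ∈ ext K s) : E g = 0 := by
  obtain ⟨P, rfl⟩ := mem_ext.1 hg
  rw [derivation_aeval E hE, hs, mul_zero]

variable [IsDomain A] {p : ℕ} [CharP A p]

theorem eq_C_of_derivative_eq_zero {K : Subalgebra F A} {P : K[X]}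
    (hP : P.natDegree < p) (h : derivative P = 0) : P = C (P.coeff 0) := by
  ext1 n
  rcases n with _ | n
  · simp
  · rw [coeff_C_succ]
    by_contra hne
    have hle := le_natDegree_of_ne_zero hne
    have h1 := congrArg (fun Q => ((Q.coeff n : K) : A)) h
    simp only [coeff_derivative, coeff_zero] at h1
    push_cast at h1
    rcases mul_eq_zero.1 h1 with h2 | h2
    · exact hne (by exact_mod_cast h2)
    · have h3 : ((n + 1 : ℕ) : A) = 0 := by exact_mod_cast h2
      rw [CharP.cast_eq_zero_iff A p] at h3
      exact absurd (Nat.le_of_dvd (Nat.succ_pos n) h3) (by omega)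

/-- The powers `1, s, …, s^(p-1)` are independent over constants of `E` when `E s ≠ 0`: applying `E`
to a relation gives one of smaller degree. -/
theorem eq_zero_of_aeval_eq_zero {K : Subalgebra F A} (E : Derivation F A A)
    (hE : ∀ k ∈ K, E k = 0) {s : A} (hs : E s ≠ 0) :
    ∀ (n : ℕ) (P : K[X]), P.natDegree < p → P.natDegree ≤ n → aeval s P = 0 → P = 0 := by
  have const : ∀ P : K[X], P = C (P.coeff 0) → aeval s P = 0 → P = 0 := by
    intro P hP h
    rw [hP, aeval_C, algebraMap_coe] at h
    have h0 : P.coeff 0 = 0 := by exact_mod_cast h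
    rw [hP, h0, C_0]
  intro n
  induction n with
  | zero => exact fun P _ hn h => const P (eq_C_of_natDegree_le_zero hn) h
  | succ n ih =>
    intro P hP hn h
    refine const P (eq_C_of_derivative_eq_zero hP ?_) h
    have hd := natDegree_derivative_le P
    refine ih _ (by omega) (by omega) ?_
    have h1 := derivation_aeval E hE s P
    rw [h, map_zero] at h1
    exact (mul_eq_zero.1 h1.symm).resolve_right hs

/-- `K[s] ∩ ker E = K`. -/
theorem mem_of_derivation_eq_zero (hp : p.Prime) {K : Subalgebra F A} (E : Derivation F A A)
    (hE : ∀ k ∈ K, E k = 0) {s : A} (hs : E s ≠ 0) (hsp : s ^ p ∈ K) {g : A}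
    (hg : g ∈ ext K s) (h : E g = 0) : g ∈ K := by
  obtain ⟨P, hP, rfl⟩ := exists_degree_lt hp.ne_zero hsp hg
  rw [derivation_aeval E hE, mul_eq_zero] at h
  have hd := natDegree_derivative_le P
  have h1 := eq_zero_of_aeval_eq_zero E hE hs _ _ (by omega) le_rfl (h.resolve_right hs)
  rw [eq_C_of_derivative_eq_zero hP h1, aeval_C]
  exact (P.coeff 0).2

end General

end InvariantsG4

open MvPolynomial

namespace InvariantsG4

/-! ### The algebras `R₀ ⊆ R` and their derivations -/

variable (F : Type*) [Field F] (p : ℕ)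

/-- `Δ = x₃² − 2x₂x₄`. -/
noncomputable def disc : MvPolynomial (Fin 4) F := X 2 ^ 2 - 2 * X 1 * X 3

/-- `R = F[x₁ᵖ, x₂ᵖ, x₃ᵖ, x₄, Δ]`. -/
noncomputable def R : Subalgebra F (MvPolynomial (Fin 4) F) :=
  Algebra.adjoin F {X 0 ^ p, X 1 ^ p, X 2 ^ p, X 3, X 2 ^ 2 - 2 * X 1 * X 3}

/-- `R₀ = F[x₁ᵖ, x₂ᵖ, x₃ᵖ, x₄]`. -/
noncomputable def R₀ : Subalgebra F (MvPolynomial (Fin 4) F) :=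
  Algebra.adjoin F {X 0 ^ p, X 1 ^ p, X 2 ^ p, X 3}

/-- The derivation `D = x₃∂₂ + x₄∂₃`. -/
noncomputable def D : Derivation F (MvPolynomial (Fin 4) F) (MvPolynomial (Fin 4) F) :=
  (X 2 : MvPolynomial (Fin 4) F) • pderiv 1 + (X 3 : MvPolynomial (Fin 4) F) • pderiv 2

/-- The substitution `x₄ = 0`. -/
noncomputable def φ : MvPolynomial (Fin 4) F →ₐ[F] MvPolynomial (Fin 4) F :=
  aeval ![X 0, X 1, X 2, 0]

theorem D_apply (f : MvPolynomial (Fin 4) F) :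
    D F f = X 2 * pderiv 1 f + X 3 * pderiv 2 f := rfl

theorem R₀_le_R : R₀ F p ≤ R F p :=
  Algebra.adjoin_mono (by intro x; simp only [Set.mem_insert_iff, Set.mem_singleton_iff]; tauto)

theorem disc_mem_R : disc F ∈ R F p := Algebra.subset_adjoin (by simp [disc])

variable {F p}

/-- A derivation killing all generators of a subalgebra kills the subalgebra. -/
theorem derivation_adjoin_eq_zero {A : Type*} [CommRing A] [Algebra F A] (E : Derivation F A A)
    {S : Set A} (hS : ∀ x ∈ S, E x = 0) {r : A} (hr : r ∈ Algebra.adjoin F S) : E r = 0 := by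
  induction hr using Algebra.adjoin_induction with
  | mem x hx => exact hS x hx
  | algebraMap r => simp
  | add x y _ _ hx hy => simp [hx, hy]
  | mul x y _ _ hx hy => simp [hx, hy]

theorem derivation_pow_char {A : Type*} [CommRing A] [Algebra F A] [CharP A p]
    (E : Derivation F A A) (a : A) : E (a ^ p) = 0 := by
  rw [Derivation.leibniz_pow, ← Nat.cast_smul_eq_nsmul A, CharP.cast_eq_zero, zero_smul]

/-- On `R₀`, the substitution `x₄ = 0` has values in `R₀`, and the difference is divisible by `x₄`
within `R₀`. -/
theorem R₀_split {r : MvPolynomial (Fin 4) F} (hr : r ∈ R₀ F p) :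
    φ F r ∈ R₀ F p ∧ ∃ q ∈ R₀ F p, r = φ F r + X 3 * q := by
  have gen : ∀ x ∈ ({X 0 ^ p, X 1 ^ p, X 2 ^ p, X 3} : Set (MvPolynomial (Fin 4) F)),
      x ∈ R₀ F p := fun x hx => Algebra.subset_adjoin hx
  have h3 : (X 3 : MvPolynomial (Fin 4) F) ∈ R₀ F p := gen _ (by simp)
  induction hr using Algebra.adjoin_induction with
  | mem x hx =>
    have hx' := gen x hx
    rcases hx with rfl | rfl | rfl | rfl
    · have e : φ F (X 0 ^ p) = X 0 ^ p := by simp [φ]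
      rw [e]; exact ⟨hx', 0, zero_mem _, by simp⟩
    · have e : φ F (X 1 ^ p) = X 1 ^ p := by simp [φ]
      rw [e]; exact ⟨hx', 0, zero_mem _, by simp⟩
    · have e : φ F (X 2 ^ p) = X 2 ^ p := by simp [φ]
      rw [e]; exact ⟨hx', 0, zero_mem _, by simp⟩
    · have e : φ F (X 3) = 0 := by simp [φ]
      rw [e]; exact ⟨zero_mem _, 1, one_mem _, by simp⟩
  | algebraMap r =>
    rw [AlgHom.commutes]
    exact ⟨Subalgebra.algebraMap_mem _ _, 0, zero_mem _, by simp⟩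
  | add x y _ _ hx hy =>
    obtain ⟨hx, a, ha, ea⟩ := hx
    obtain ⟨hy, b, hb, eb⟩ := hy
    rw [map_add]
    exact ⟨add_mem hx hy, a + b, add_mem ha hb, by linear_combination ea + eb⟩
  | mul x y hxm hym hx hy =>
    obtain ⟨hx, a, ha, ea⟩ := hx
    obtain ⟨hy, b, hb, eb⟩ := hy
    rw [map_mul]
    exact ⟨mul_mem hx hy, a * y + φ F x * b, add_mem (mul_mem ha hym) (mul_mem hx hb), by
      linear_combination y * ea + φ F x * eb⟩

theorem R_le_ext : R F p ≤ ext (R₀ F p) (disc F) := by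
  refine Algebra.adjoin_le ?_
  have gen : ∀ x ∈ ({X 0 ^ p, X 1 ^ p, X 2 ^ p, X 3} : Set (MvPolynomial (Fin 4) F)),
      x ∈ ext (R₀ F p) (disc F) := fun x hx => le_ext _ _ (Algebra.subset_adjoin hx)
  rintro x (rfl | rfl | rfl | rfl | rfl)
  · exact gen _ (by simp)
  · exact gen _ (by simp)
  · exact gen _ (by simp)
  · exact gen _ (by simp)
  · exact self_mem_ext _ _

variable [CharP F p]

theorem pderiv_zero_R {r : MvPolynomial (Fin 4) F} (hr : r ∈ R F p) : pderiv 0 r = 0 := by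
  refine derivation_adjoin_eq_zero _ ?_ hr
  rintro x (rfl | rfl | rfl | rfl | rfl)
  · exact derivation_pow_char _ _
  · exact derivation_pow_char _ _
  · exact derivation_pow_char _ _
  · simp [pderiv_X]
  · have h2 : pderiv 0 (2 : MvPolynomial (Fin 4) F) = 0 := Derivation.map_natCast _ 2
    simp [pderiv_X, h2, Derivation.leibniz_pow]

theorem D_R {r : MvPolynomial (Fin 4) F} (hr : r ∈ R F p) : D F r = 0 := by
  refine derivation_adjoin_eq_zero _ ?_ hr
  rintro x (rfl | rfl | rfl | rfl | rfl)
  · exact derivation_pow_char _ _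
  · exact derivation_pow_char _ _
  · exact derivation_pow_char _ _
  · simp [D_apply, pderiv_X]
  · have h2 (i) : pderiv i (2 : MvPolynomial (Fin 4) F) = 0 := Derivation.map_natCast _ 2
    simp [D_apply, pderiv_X, h2, Derivation.leibniz_pow]
    ring

theorem pderiv_two_R₀ {r : MvPolynomial (Fin 4) F} (hr : r ∈ R₀ F p) :
    pderiv 2 r = 0 := by
  refine derivation_adjoin_eq_zero _ ?_ hr
  rintro x (rfl | rfl | rfl | rfl)
  · exact derivation_pow_char _ _
  · exact derivation_pow_char _ _
  · exact derivation_pow_char _ _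
  · simp [pderiv_X]

theorem two_ne_zero' (hp3 : 3 ≤ p) : (2 : F) ≠ 0 := by
  intro h
  have h' : ((2 : ℕ) : F) = 0 := by exact_mod_cast h
  rw [CharP.cast_eq_zero_iff F p] at h'
  exact absurd (Nat.le_of_dvd two_pos h') (by omega)

theorem two_ne_zero_mv (hp3 : 3 ≤ p) : (2 : MvPolynomial (Fin 4) F) ≠ 0 := by
  have : (2 : MvPolynomial (Fin 4) F) = C 2 := (map_ofNat C 2).symm
  rw [this, Ne, C_eq_zero]
  exact two_ne_zero' hp3

/-- `Δᵖ = x₃²ᵖ − 2ᵖx₂ᵖx₄ᵖ` lies in `R₀`. -/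
theorem disc_pow_mem (hp : p.Prime) : disc F ^ p ∈ R₀ F p := by
  have := Fact.mk hp
  have gen : ∀ x ∈ ({X 0 ^ p, X 1 ^ p, X 2 ^ p, X 3} : Set (MvPolynomial (Fin 4) F)),
      x ∈ R₀ F p := fun x hx => Algebra.subset_adjoin hx
  rw [disc, sub_pow_char, mul_pow, mul_pow, ← pow_mul, mul_comm 2 p, pow_mul]
  exact sub_mem (pow_mem (gen _ (by simp)) _)
    (mul_mem (mul_mem (pow_mem (ofNat_mem _ 2) _) (gen _ (by simp))) (pow_mem (gen _ (by simp)) _))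

/-! ### Inverting and cancelling `x₄` -/

/-- `R ∩ x₄A = x₄R`. -/
theorem mem_of_X_three_mul_mem (hp : p.Prime) (hp3 : 3 ≤ p) {f : MvPolynomial (Fin 4) F}
    (hf : X 3 * f ∈ R F p) : f ∈ R F p := by
  obtain ⟨P, hP, hPf⟩ := exists_degree_lt hp.ne_zero (disc_pow_mem hp) (R_le_ext hf)
  -- `φ` as an endomorphism of `R₀`, so that it can be applied to the coefficients of `P`
  let ψ : R₀ F p →+* R₀ F p :=
    ((φ F : MvPolynomial (Fin 4) F →+* MvPolynomial (Fin 4) F).comp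
      (R₀ F p).val.toRingHom).codRestrict (R₀ F p) (fun r => (R₀_split r.2).1)
  have hψ : ∀ r : R₀ F p, (ψ r : MvPolynomial (Fin 4) F) = φ F r := fun r => rfl
  have hmap : Polynomial.aeval (X 2 ^ 2 : MvPolynomial (Fin 4) F) (P.map ψ) = 0 := by
    have h1 : φ F (Polynomial.aeval (disc F) P) = 0 := by rw [hPf]; simp [φ]
    have hd : φ F (disc F) = X 2 ^ 2 := by simp [φ, disc]
    rw [← h1, Polynomial.aeval_def, Polynomial.aeval_def, Polynomial.eval₂_map, ← hd]
    exact (Polynomial.hom_eval₂ P _ (φ F : MvPolynomial (Fin 4) F →+* MvPolynomial (Fin 4) F) (disc F)).symm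
  have hz : P.map ψ = 0 := by
    refine eq_zero_of_aeval_eq_zero (pderiv 2) (fun k hk => pderiv_two_R₀ hk) ?_ _ _
      (lt_of_le_of_lt Polynomial.natDegree_map_le hP) le_rfl hmap
    rw [Derivation.leibniz_pow]
    simpa [pderiv_X] using two_ne_zero_mv (F := F) hp3
  have hc : ∀ n, ∃ q ∈ R₀ F p, (P.coeff n : MvPolynomial (Fin 4) F) = X 3 * q := by
    intro n
    obtain ⟨-, q, hq, e⟩ := R₀_split (P.coeff n).2
    have h0 := congrArg (fun Q => ((Q.coeff n : R₀ F p) : MvPolynomial (Fin 4) F)) hz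
    simp only [Polynomial.coeff_map, hψ, Polynomial.coeff_zero, ZeroMemClass.coe_zero] at h0
    exact ⟨q, hq, by rw [e, h0, zero_add]⟩
  choose q hq hPq using hc
  have hfq : f = ∑ i ∈ Finset.range (P.natDegree + 1), q i * disc F ^ i := by
    refine mul_left_cancel₀ (X_ne_zero (R := F) (3 : Fin 4)) ?_
    rw [← hPf, Polynomial.aeval_eq_sum_range, Finset.mul_sum]
    refine Finset.sum_congr rfl fun i _ => ?_
    rw [Subalgebra.smul_def, smul_eq_mul, hPq, mul_assoc]
  rw [hfq]
  exact sum_mem fun i _ => mul_mem (R₀_le_R F p (hq i)) (pow_mem (disc_mem_R F p) _)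

/-- After inverting `x₄`, the algebra `R[x₃][x₁]` becomes everything. -/
theorem exists_pow_mul_mem (hp3 : 3 ≤ p) (f : MvPolynomial (Fin 4) F) :
    ∃ N : ℕ, X 3 ^ N * f ∈ ext (ext (R F p) (X 2)) (X 0) := by
  have hR : R F p ≤ ext (ext (R F p) (X 2)) (X 0) := (le_ext _ _).trans (le_ext _ _)
  have h0 : (X 0 : MvPolynomial (Fin 4) F) ∈ ext (ext (R F p) (X 2)) (X 0) := self_mem_ext _ _
  have h2 : (X 2 : MvPolynomial (Fin 4) F) ∈ ext (ext (R F p) (X 2)) (X 0) :=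
    le_ext _ _ (self_mem_ext _ _)
  have h3 : (X 3 : MvPolynomial (Fin 4) F) ∈ ext (ext (R F p) (X 2)) (X 0) :=
    hR (Algebra.subset_adjoin (by simp))
  have h13 : (X 3 * X 1 : MvPolynomial (Fin 4) F) ∈ ext (ext (R F p) (X 2)) (X 0) := by
    have e : (X 3 * X 1 : MvPolynomial (Fin 4) F) = (2 : F)⁻¹ • (X 2 ^ 2 - disc F) := by
      have : X 2 ^ 2 - disc F = (2 : F) • (X 3 * X 1 : MvPolynomial (Fin 4) F) := by
        rw [disc, smul_eq_C_mul, map_ofNat]; ring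
      rw [this, inv_smul_smul₀ (two_ne_zero' hp3)]
    rw [e]
    exact Subalgebra.smul_mem _ (sub_mem (pow_mem h2 2) (hR (disc_mem_R F p))) _
  induction f using MvPolynomial.induction_on with
  | C a => exact ⟨0, by
      rw [pow_zero, one_mul]
      exact Subalgebra.algebraMap_mem (ext (ext (R F p) (X 2)) (X 0)) a⟩
  | add f g hf hg =>
    obtain ⟨N, hN⟩ := hf
    obtain ⟨M, hM⟩ := hg
    refine ⟨N + M, ?_⟩
    have e : X 3 ^ (N + M) * (f + g) = X 3 ^ M * (X 3 ^ N * f) + X 3 ^ N * (X 3 ^ M * g) := by ring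
    rw [e]
    exact add_mem (mul_mem (pow_mem h3 _) hN) (mul_mem (pow_mem h3 _) hM)
  | mul_X f i hf =>
    obtain ⟨N, hN⟩ := hf
    refine ⟨N + 1, ?_⟩
    have e : X 3 ^ (N + 1) * (f * X i) = (X 3 ^ N * f) * (X 3 * X i) := by ring
    rw [e]
    refine mul_mem hN ?_
    fin_cases i
    · exact mul_mem h3 h0
    · exact h13
    · exact mul_mem h3 h2
    · exact mul_mem h3 h3

theorem mem_R (hp : p.Prime) (hp3 : 3 ≤ p) {f : MvPolynomial (Fin 4) F}
    (h0 : pderiv 0 f = 0) (hD : D F f = 0) : f ∈ R F p := by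
  obtain ⟨N, hN⟩ := exists_pow_mul_mem hp3 f
  have h3 : (X 3 : MvPolynomial (Fin 4) F) ^ N ∈ R F p :=
    pow_mem (Algebra.subset_adjoin (by simp)) N
  have hN1 : X 3 ^ N * f ∈ ext (R F p) (X 2) := by
    refine mem_of_derivation_eq_zero hp (pderiv 0) (fun k hk =>
      derivation_ext_eq_zero (pderiv 0) (fun r hr => pderiv_zero_R hr) (by simp [pderiv_X]) hk)
      (by simp) (le_ext _ _ (Algebra.subset_adjoin (by simp))) hN ?_
    rw [Derivation.leibniz, h0, pderiv_zero_R h3]; simp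
  have hN2 : X 3 ^ N * f ∈ R F p := by
    refine mem_of_derivation_eq_zero hp (D F) (fun r hr => D_R hr) ?_
      (Algebra.subset_adjoin (by simp)) hN1 ?_
    · simp [D_apply, pderiv_X]
    · rw [Derivation.leibniz, hD, D_R h3]; simp
  clear hN hN1 h3
  induction N with
  | zero => simpa using hN2
  | succ N ih => exact ih (mem_of_X_three_mul_mem hp hp3 (by rwa [← mul_assoc, ← pow_succ']))

end InvariantsG4

/-- Let `p ≥ 3` be a prime and `F` a field of characteristic `p`.  The
set of polynomials `f ∈ F[x₁,x₂,x₃,x₄]` satisfying the invariance equations of the adjoint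
action of the Lie algebra `g₄` (with brackets `[x₁,x₂]=x₃`, `[x₁,x₃]=x₄`), namely
`x₃∂₂f + x₄∂₃f = 0`, `x₃∂₁f = 0` and `x₄∂₁f = 0`, equals the `F`-subalgebra generated by
`x₁^p, x₂^p, x₃^p, x₄` and `x₃² − 2x₂x₄`. -/
theorem invariants_g4
    (F : Type*) [Field F] (p : ℕ) (hp : p.Prime) (hp3 : 3 ≤ p) [CharP F p] :
    {f : MvPolynomial (Fin 4) F |
        X 2 * pderiv 1 f + X 3 * pderiv 2 f = 0 ∧
        X 2 * pderiv 0 f = 0 ∧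
        X 3 * pderiv 0 f = 0} =
      (Algebra.adjoin F {(X 0 : MvPolynomial (Fin 4) F) ^ p, X 1 ^ p, X 2 ^ p, X 3,
        X 2 ^ 2 - 2 * X 1 * X 3} : Subalgebra F (MvPolynomial (Fin 4) F)) := by
  ext f
  constructor
  · rintro ⟨hD, h0, -⟩
    exact InvariantsG4.mem_R hp hp3 ((mul_eq_zero.1 h0).resolve_left (X_ne_zero _)) hD
  · intro hf
    have h0 : pderiv 0 f = 0 := InvariantsG4.pderiv_zero_R (p := p) hf
    exact ⟨InvariantsG4.D_R (p := p) hf, by rw [h0, mul_zero], by rw [h0, mul_zero]⟩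
end
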